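/- Suppose ν is pure and centered at m, where k is the type and λ the strength of the minimum m of G, and suppose ν has a finite second moment. Then for μ-almost every realization h and every α with 1 − 1/(2(2k−1)) < α < 1, the sequence of laws of (S_n − n m)/n^α under P_{n,β}^h satisfies a moderate deviations principle with speed n^{1−2k(1−α)} and rate function I(x) = x²/(2σ²) with σ² = λ^{−1} − β^{−1} if k = 1, and I(x) = λ x^{2k}/(2k)! if k ≥ 2. -/

import Mathlib

open MeasureTheory ProbabilityTheory Real Filter Topology
open scoped ENNReal NNReal

noncomputable section

/-- The value of a spin encoded as a Boolean. -/
def spin (b : Bool) : ℝ := if b then 1 else -1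

/-- Total magnetization of a configuration. -/
def mag {n : ℕ} (σ : Fin n → Bool) : ℝ := ∑ i, spin (σ i)

/-- Gibbs weight of a configuration in the random field Curie-Weiss model. -/
def gibbsWeight (β : ℝ) (h : ℕ → ℝ) (n : ℕ) (σ : Fin n → Bool) : ℝ :=
  Real.exp (β / (2 * n) * (mag σ) ^ 2 + β * ∑ i : Fin n, h i * spin (σ i))

/-- The random field Curie-Weiss Gibbs measure on configurations. -/
def gibbsMeasure (β : ℝ) (h : ℕ → ℝ) (n : ℕ) : Measure (Fin n → Bool) :=
  (ENNReal.ofReal (∑ σ : Fin n → Bool, gibbsWeight β h n σ))⁻¹ •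
    ∑ σ : Fin n → Bool, ENNReal.ofReal (gibbsWeight β h n σ) • Measure.dirac σ

/-- `μ` is the infinite product of `ν` over `ℕ` (characterised by finite marginals). -/
def IsProductMeasure (ν : Measure ℝ) (μ : Measure (ℕ → ℝ)) : Prop :=
  ∀ n : ℕ, μ.map (fun h (i : Fin n) => h (i : ℕ)) = Measure.pi fun _ : Fin n => ν

/-- extended logarithm, `elog 0 = ⊥`, `elog ⊤ = ⊤`. -/
def elog (x : ℝ≥0∞) : EReal :=
  if x = 0 then ⊥ else if x = ⊤ then ⊤ else ((Real.log x.toReal : ℝ) : EReal)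

/-- A sequence of measures satisfies a large deviations principle with given speed and
rate function. -/
def HasLDP (P : ℕ → Measure ℝ) (speed : ℕ → ℝ) (I : ℝ → ℝ≥0∞) : Prop :=
  LowerSemicontinuous I ∧ (∀ c : ℝ, IsCompact {x : ℝ | I x ≤ ENNReal.ofReal c}) ∧
    ∀ C : Set ℝ, MeasurableSet C →
      -(⨅ x ∈ interior C, (I x : EReal)) ≤
          liminf (fun n => ((((speed n)⁻¹ : ℝ) : EReal)) * elog (P n C)) atTop ∧
        limsup (fun n => ((((speed n)⁻¹ : ℝ) : EReal)) * elog (P n C)) atTop ≤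
          -(⨅ x ∈ closure C, (I x : EReal))

/-- The function `G` of the random field Curie-Weiss model. -/
def G (β : ℝ) (ν : Measure ℝ) (x : ℝ) : ℝ :=
  β / 2 * x ^ 2 - ∫ h, Real.log (Real.cosh (β * (x + h))) ∂ν

/-- The finite-volume function `G_n^h`. -/
def Gn (β : ℝ) (h : ℕ → ℝ) (n : ℕ) (x : ℝ) : ℝ :=
  β / 2 * x ^ 2 - (1 / n) * ∑ i : Fin n, Real.log (Real.cosh (β * (x + h i)))

/-- `m` is a (local or global) minimum of `G` of type `k` and strength `l`. -/
def IsMinOfType (β : ℝ) (ν : Measure ℝ) (m : ℝ) (k : ℕ) (l : ℝ) : Prop :=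
  1 ≤ k ∧ 0 < l ∧ (∀ i : ℕ, 1 ≤ i → i ≤ 2 * k - 1 → iteratedDeriv i (G β ν) m = 0) ∧
    iteratedDeriv (2 * k) (G β ν) m = l

/-- The height of a minimum `m` of `G`. -/
def height (β : ℝ) (ν : Measure ℝ) (m : ℝ) : ℝ := G β ν m - ⨅ w, G β ν w

/-- The broadness of a minimum `m` of `G`. -/
def broadness (β : ℝ) (ν : Measure ℝ) (m : ℝ) : ℝ :=
  sInf ((fun y => |y - m|) '' {y | G β ν y < G β ν m})

/-- The moderate deviations rate function. -/
def mdpRate (β l : ℝ) (k : ℕ) (x : ℝ) : ℝ≥0∞ :=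
  if k = 1 then ENNReal.ofReal (x ^ 2 / (2 * (l⁻¹ - β⁻¹)))
  else ENNReal.ofReal (l * x ^ (2 * k) / (Nat.factorial (2 * k)))

/-- The polynomial `P_{2k}`. -/
def P2k (l : ℝ) (k : ℕ) (s : ℝ) : ℝ :=
  l / (2 * (Nat.factorial (2 * k))) * s ^ (2 * k) - ∑ i ∈ Finset.Icc 1 (2 * k - 1), |s| ^ i

/-!
The Gibbs exponent is quadratic in the magnetization, so completing the square (the
Hubbard–Stratonovich transform) turns the cumulant generating function of `S_n - n m` into a Laplace
integral of `exp (-n Gn)` around `m`, up to an explicit Gaussian term. By a uniform law of large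
numbers with rate `n ^ (-1/2 + ε)`, the increments of `Gn - G` around `m` are, for almost every
field, negligible on the scale `n ^ (α - 1)`: this is exactly what the lower bound on `α` provides.
Blowing up at that scale leaves the leading Taylor term `l * u ^ (2 * k) / (2 * k)!` of `G`. The
Gaussian term survives the blow-up only for `k = 1`, where it subtracts `β⁻¹` from the variance.
The limit of the cumulant generating functions is the Legendre transform of the rate function `I`;
it is parametrized by the slopes `deriv I x`, so that no inverse of `deriv I` is ever needed in the
Gärtner–Ellis argument.
-/

section HyperbolicTangent

theorem hasDerivAt_tanh (x : ℝ) : HasDerivAt tanh (1 - tanh x ^ 2) x := by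
  have hquot : tanh = fun y => sinh y / cosh y := funext tanh_eq_sinh_div_cosh
  rw [hquot]
  refine ((hasDerivAt_sinh x).div (hasDerivAt_cosh x) (cosh_pos x).ne').congr_deriv ?_
  have := (cosh_pos x).ne'
  field_simp

theorem hasDerivAt_log_cosh (x : ℝ) : HasDerivAt (fun y => log (cosh y)) (tanh x) x := by
  rw [tanh_eq_sinh_div_cosh]
  exact (hasDerivAt_cosh x).log (cosh_pos x).ne'

theorem lipschitzWith_tanh : LipschitzWith 1 tanh :=
  lipschitzWith_of_nnnorm_deriv_le (fun x => (hasDerivAt_tanh x).differentiableAt) fun x => by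
    rw [(hasDerivAt_tanh x).deriv, ← NNReal.coe_le_coe, coe_nnnorm, norm_eq_abs, NNReal.coe_one,
      abs_of_pos (sub_pos.2 (tanh_sq_lt_one x))]
    exact sub_le_self _ (sq_nonneg _)

theorem lipschitzWith_log_cosh : LipschitzWith 1 fun x => log (cosh x) :=
  lipschitzWith_of_nnnorm_deriv_le (fun x => (hasDerivAt_log_cosh x).differentiableAt) fun x => by
    rw [(hasDerivAt_log_cosh x).deriv, ← NNReal.coe_le_coe]
    exact (abs_tanh_lt_one x).le

@[fun_prop]
theorem continuous_tanh : Continuous tanh := lipschitzWith_tanh.continuous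

theorem continuous_log_cosh : Continuous fun x => log (cosh x) := lipschitzWith_log_cosh.continuous

theorem hasDerivAt_mul_add_const (β h x : ℝ) : HasDerivAt (fun y => β * (y + h)) β x := by
  simpa using ((hasDerivAt_id x).add_const h).const_mul β

theorem lipschitzWith_comp_mul_add {φ : ℝ → ℝ} (hφ : LipschitzWith 1 φ) (β h : ℝ) :
    LipschitzWith ‖β‖₊ fun y => φ (β * (y + h)) := by
  refine LipschitzWith.of_dist_le_mul fun y z => (hφ.dist_le_mul _ _).trans_eq ?_
  rw [Real.dist_eq, Real.dist_eq, coe_nnnorm, norm_eq_abs, NNReal.coe_one, one_mul, ← abs_mul]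
  ring_nf

end HyperbolicTangent

section MeanField

/-- The `ν`-average over the field `h` of a polynomial `p` in `tanh (β (y + h))`. These averages
are closed under differentiation in `y`, which makes all of them smooth. -/
def meanTanhPoly (β : ℝ) (ν : Measure ℝ) (p : Polynomial ℝ) (y : ℝ) : ℝ :=
  ∫ h, p.eval (tanh (β * (y + h))) ∂ν

/-- The mean magnetization `∫ tanh (β (y + h)) ∂ν` of a single spin exposed to the external field
`y` in addition to its random field `h`. -/
def meanTanh (β : ℝ) (ν : Measure ℝ) (y : ℝ) : ℝ := ∫ h, tanh (β * (y + h)) ∂ν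

variable (β : ℝ) (ν : Measure ℝ) [IsFiniteMeasure ν]

theorem meanTanhPoly_X (ν : Measure ℝ) : meanTanhPoly β ν Polynomial.X = meanTanh β ν := by
  ext y
  simp only [meanTanhPoly, meanTanh, Polynomial.eval_X]

theorem exists_abs_eval_tanh_le (p : Polynomial ℝ) : ∃ C, ∀ x, |p.eval (tanh x)| ≤ C := by
  obtain ⟨C, hC⟩ := (isCompact_Icc (a := (-1 : ℝ)) (b := 1)).exists_bound_of_continuousOn
    p.continuous.continuousOn
  exact ⟨C, fun x => hC _ (abs_le.1 ((abs_tanh_lt_one x).le))⟩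

theorem integrable_eval_tanh (p : Polynomial ℝ) (y : ℝ) :
    Integrable (fun h => p.eval (tanh (β * (y + h)))) ν := by
  obtain ⟨C, hC⟩ := exists_abs_eval_tanh_le p
  exact .of_bound (by fun_prop) C (.of_forall fun h => hC _)

theorem hasDerivAt_meanTanhPoly (p : Polynomial ℝ) (y : ℝ) :
    HasDerivAt (meanTanhPoly β ν p) (meanTanhPoly β ν
      (Polynomial.derivative p * ((1 - Polynomial.X ^ 2) * Polynomial.C β)) y) y := by
  obtain ⟨C, hC⟩ := exists_abs_eval_tanh_le
    (Polynomial.derivative p * ((1 - Polynomial.X ^ 2) * Polynomial.C β))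
  refine (hasDerivAt_integral_of_dominated_loc_of_deriv_le (bound := fun _ => C)
    (Metric.ball_mem_nhds y one_pos)
    (.of_forall fun x => (integrable_eval_tanh β ν p x).aestronglyMeasurable)
    (integrable_eval_tanh β ν p y) (integrable_eval_tanh β ν _ y).aestronglyMeasurable
    (.of_forall fun h x _ => hC (β * (x + h))) (integrable_const C)
    (.of_forall fun h x _ => ?_)).2
  refine ((p.hasDerivAt _).comp x
    ((hasDerivAt_tanh _).comp x (hasDerivAt_mul_add_const β h x))).congr_deriv ?_
  simp only [Polynomial.eval_mul, Polynomial.eval_sub, Polynomial.eval_one, Polynomial.eval_pow,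
    Polynomial.eval_X, Polynomial.eval_C, Function.comp_apply]

theorem contDiff_meanTanhPoly (n : ℕ) (p : Polynomial ℝ) : ContDiff ℝ n (meanTanhPoly β ν p) := by
  induction n generalizing p with
  | zero =>
    rw [Nat.cast_zero, contDiff_zero, continuous_iff_continuousAt]
    exact fun x => (hasDerivAt_meanTanhPoly β ν p x).continuousAt
  | succ n ih =>
    rw [Nat.cast_succ, contDiff_succ_iff_deriv]
    refine ⟨fun x => (hasDerivAt_meanTanhPoly β ν p x).differentiableAt, by simp, ?_⟩
    rw [funext fun x => (hasDerivAt_meanTanhPoly β ν p x).deriv]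
    exact ih _

theorem contDiff_meanTanh (n : ℕ) : ContDiff ℝ n (meanTanh β ν) :=
  meanTanhPoly_X β ν ▸ contDiff_meanTanhPoly β ν n Polynomial.X

theorem deriv_meanTanh_pos {β : ℝ} (hβ : 0 < β) [NeZero ν] (y : ℝ) :
    0 < deriv (meanTanh β ν) y := by
  rw [← meanTanhPoly_X, (hasDerivAt_meanTanhPoly β ν _ y).deriv]
  have hpos (h : ℝ) : 0 < (Polynomial.derivative Polynomial.X *
      ((1 - Polynomial.X ^ 2) * Polynomial.C β)).eval (tanh (β * (y + h))) := by
    simpa using mul_pos (sub_pos.2 (tanh_sq_lt_one (β * (y + h)))) hβ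
  refine (integral_pos_iff_support_of_nonneg (fun h => (hpos h).le)
    (integrable_eval_tanh β ν _ y)).2 ?_
  rw [Function.support_eq_univ fun h => (hpos h).ne']
  exact Measure.measure_univ_pos.2 (NeZero.ne ν)

variable {ν} (hν : Integrable (fun x : ℝ => x) ν)
include hν

theorem integrable_log_cosh (y : ℝ) : Integrable (fun h => log (cosh (β * (y + h)))) ν := by
  refine (((integrable_const y).add hν).const_mul β).mono
    (continuous_log_cosh.comp (by fun_prop)).aestronglyMeasurable (.of_forall fun h => ?_)
  simpa using lipschitzWith_log_cosh.dist_le_mul (β * (y + h)) 0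

theorem hasDerivAt_G (y : ℝ) : HasDerivAt (G β ν) (β * y - β * meanTanh β ν y) y := by
  have hint : HasDerivAt (fun x => ∫ h, log (cosh (β * (x + h))) ∂ν)
      (∫ h, tanh (β * (y + h)) * β ∂ν) y := by
    refine (hasDerivAt_integral_of_dominated_loc_of_deriv_le (bound := fun _ => |β|)
      (F' := fun x h => tanh (β * (x + h)) * β) (Metric.ball_mem_nhds y one_pos)
      (.of_forall fun x => (integrable_log_cosh β hν x).aestronglyMeasurable)
      (integrable_log_cosh β hν y) (Continuous.aestronglyMeasurable (by fun_prop))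
      (.of_forall fun h x _ => ?_) (integrable_const _) (.of_forall fun h x _ => ?_)).2
    · rw [norm_mul, norm_eq_abs, norm_eq_abs]
      exact mul_le_of_le_one_left (abs_nonneg _) (abs_tanh_lt_one _).le
    · exact (hasDerivAt_log_cosh (β * (x + h))).comp x (hasDerivAt_mul_add_const β h x)
  rw [integral_mul_const, ← meanTanh] at hint
  refine (((hasDerivAt_pow 2 y).const_mul (β / 2)).sub hint).congr_deriv ?_
  push_cast
  ring

theorem deriv_G : deriv (G β ν) = fun y => β * y - β * meanTanh β ν y :=
  funext fun y => (hasDerivAt_G β hν y).deriv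

theorem contDiff_G (n : ℕ) : ContDiff ℝ n (G β ν) := by
  suffices ContDiff ℝ ((n : WithTop ℕ∞) + 1) (G β ν) from this.of_le le_self_add
  rw [contDiff_succ_iff_deriv, deriv_G β hν]
  have := contDiff_meanTanh β ν n
  exact ⟨fun x => (hasDerivAt_G β hν x).differentiableAt, by simp, by fun_prop⟩

theorem iteratedDeriv_two_G_lt {β : ℝ} (hβ : 0 < β) [NeZero ν] (y : ℝ) :
    iteratedDeriv 2 (G β ν) y < β := by
  have hdiff : DifferentiableAt ℝ (meanTanh β ν) y :=
    (contDiff_meanTanh β ν 1).differentiable one_ne_zero y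
  have hderiv := ((hasDerivAt_id y).const_mul β).sub (hdiff.hasDerivAt.const_mul β)
  rw [iteratedDeriv_succ, iteratedDeriv_one, deriv_G β hν]
  refine hderiv.deriv.trans_lt ?_
  linarith [mul_pos hβ (deriv_meanTanh_pos ν hβ y)]

end MeanField

section GrowthAtInfinity

variable {ν : Measure ℝ} [IsProbabilityMeasure ν] (hν : Integrable (fun x : ℝ => x) ν)
include hν

theorem abs_integral_log_cosh_sub_le (β x y : ℝ) :
    |(∫ h, log (cosh (β * (x + h))) ∂ν) - ∫ h, log (cosh (β * (y + h))) ∂ν| ≤ |β| * |x - y| := by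
  rw [← integral_sub (integrable_log_cosh β hν x) (integrable_log_cosh β hν y)]
  have hbound (h : ℝ) : ‖log (cosh (β * (x + h))) - log (cosh (β * (y + h)))‖ ≤ |β| * |x - y| :=
    (lipschitzWith_comp_mul_add lipschitzWith_log_cosh β h).dist_le_mul x y
  simpa using norm_integral_le_of_norm_le_const (μ := ν) (.of_forall hbound)

theorem le_G_add_sub_G {β : ℝ} (hβ : 0 ≤ β) (m u : ℝ) :
    β / 2 * u ^ 2 - β * (|m| + 1) * |u| ≤ G β ν (m + u) - G β ν m := by
  have hlog := (abs_le.1 (abs_integral_log_cosh_sub_le hν β (m + u) m)).2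
  have hmu : -(β * (|m| * |u|)) ≤ β * (m * u) := by
    rw [← mul_neg, ← abs_mul]
    exact mul_le_mul_of_nonneg_left (neg_abs_le _) hβ
  rw [add_sub_cancel_left, abs_of_nonneg hβ] at hlog
  unfold G
  linarith

end GrowthAtInfinity

theorem isLittleO_sub_of_iteratedDeriv_eq_zero {f : ℝ → ℝ} {n : ℕ} (hf : ContDiff ℝ n f)
    (hn : n ≠ 0) {m : ℝ} (hzero : ∀ i, 1 ≤ i → i < n → iteratedDeriv i f m = 0) :
    (fun u => f (m + u) - f m - iteratedDeriv n f m / n.factorial * u ^ n) =o[𝓝 0]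
      fun u => u ^ n := by
  have htaylor (x : ℝ) : taylorWithinEval f n Set.univ m x =
      f m + iteratedDeriv n f m / n.factorial * (x - m) ^ n := by
    rw [taylor_within_apply, Finset.sum_range_succ,
      Finset.sum_eq_single_of_mem 0 (Finset.mem_range.2 (by omega))]
    · simp only [iteratedDerivWithin_univ, Nat.factorial_zero, Nat.cast_one, inv_one, pow_zero,
        mul_one, iteratedDeriv_zero, smul_eq_mul, one_mul]
      ring
    · intro i hi hi0
      rw [iteratedDerivWithin_univ, hzero i (by omega) (Finset.mem_range.1 hi), smul_zero]
  have hshift : Tendsto (fun u : ℝ => m + u) (𝓝 0) (𝓝 m) :=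
    Continuous.tendsto' (by fun_prop) 0 m (add_zero m)
  simpa only [Function.comp_def, htaylor, add_sub_cancel_left, sub_add_eq_sub_sub] using
    (taylor_isLittleO_univ (x₀ := m) hf).comp_tendsto hshift

section UniformLawOfLargeNumbers

theorem IsProductMeasure.eq_infinitePi {ν : Measure ℝ} [IsProbabilityMeasure ν]
    {μ : Measure (ℕ → ℝ)} (hμ : IsProductMeasure ν μ) : μ = Measure.infinitePi fun _ => ν := by
  refine Measure.eq_infinitePi _ fun s t ht => ?_
  obtain ⟨n, hn⟩ := s.exists_nat_subset_range
  let box (i : Fin n) : Set ℝ := if (i : ℕ) ∈ s then t i else Set.univ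
  have hbox (i : Fin n) : MeasurableSet (box i) := by
    simp only [box]
    split_ifs
    exacts [ht i, .univ]
  have hpre : Set.pi (s : Set ℕ) t = (fun (h : ℕ → ℝ) (i : Fin n) => h i) ⁻¹' Set.univ.pi box := by
    ext h
    simp only [Set.mem_pi, Finset.mem_coe, Set.mem_preimage, Set.mem_univ, true_imp_iff, box]
    refine ⟨fun hh i => ?_, fun hh i hi => ?_⟩
    · split_ifs with hi
      exacts [hh i hi, trivial]
    · simpa only [hi, if_true] using hh ⟨i, Finset.mem_range.1 (hn hi)⟩
  rw [hpre, ← Measure.map_apply (by fun_prop) (.univ_pi hbox), hμ n, Measure.pi_pi]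
  simp only [box, apply_ite ν, measure_univ]
  rw [Fin.prod_univ_eq_prod_range (fun i => if i ∈ s then ν (t i) else 1) n,
    Finset.prod_ite_mem, Finset.inter_eq_right.2 hn]

theorem measureReal_abs_sum_range_ge_le_of_iIndepFun {Ω : Type*} [MeasurableSpace Ω]
    {μ : Measure Ω} {X : ℕ → Ω → ℝ} (hindep : iIndepFun X μ) {c : ℝ≥0}
    (hX : ∀ i, HasSubgaussianMGF (X i) c μ) (n : ℕ) {t : ℝ} (ht : 0 ≤ t) :
    μ.real {ω | t ≤ |∑ i ∈ Finset.range n, X i ω|} ≤ 2 * exp (-t ^ 2 / (2 * n * c)) := by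
  have := hindep.isProbabilityMeasure
  have hupper := HasSubgaussianMGF.measure_sum_range_ge_le_of_iIndepFun hindep
    (fun i _ => hX i) (n := n) ht
  have hlower := HasSubgaussianMGF.measure_sum_range_ge_le_of_iIndepFun (n := n)
    (hindep.comp (fun _ => Neg.neg) fun _ => measurable_neg) (fun i _ => (hX i).neg) ht
  have hsplit : {ω | t ≤ |∑ i ∈ Finset.range n, X i ω|} ⊆
      {ω | t ≤ ∑ i ∈ Finset.range n, X i ω} ∪
        {ω | t ≤ ∑ i ∈ Finset.range n, (Neg.neg ∘ X i) ω} := by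
    intro ω hω
    simpa only [Set.mem_union, Set.mem_ofPred_eq, Function.comp, Finset.sum_neg_distrib, le_abs]
      using hω
  linarith [(measureReal_mono (μ := μ) hsplit).trans (measureReal_union_le _ _)]

theorem summable_succ_mul_exp_neg_mul_rpow {b p : ℝ} (hb : 0 < b) (hp : 0 < p) :
    Summable fun n : ℕ => ((n : ℝ) + 1) * exp (-b * (n : ℝ) ^ p) := by
  have hpow : Tendsto (fun n : ℕ => (n : ℝ) ^ p) atTop atTop :=
    (tendsto_rpow_atTop hp).comp tendsto_natCast_atTop_atTop
  have hlim := (tendsto_rpow_mul_exp_neg_mul_atTop_nhds_zero (3 / p) b hb).comp hpow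
  refine Summable.of_norm_bounded_eventually_nat
    ((summable_one_div_nat_pow.2 one_lt_two).mul_left 2) ?_
  filter_upwards [hlim.eventually (gt_mem_nhds one_pos), eventually_ge_atTop 1] with n hn hn1
  have hn1' : (1 : ℝ) ≤ n := by exact_mod_cast hn1
  have hcube : ((n : ℝ) ^ p) ^ (3 / p) = (n : ℝ) ^ 3 := by
    rw [← rpow_mul (by positivity), mul_div_cancel₀ _ hp.ne']
    exact_mod_cast rpow_natCast (n : ℝ) 3
  rw [Function.comp_apply, hcube] at hn
  rw [norm_of_nonneg (by positivity), mul_one_div, le_div_iff₀ (by positivity)]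
  calc ((n : ℝ) + 1) * exp (-b * (n : ℝ) ^ p) * (n : ℝ) ^ 2
      ≤ (2 * n) * exp (-b * (n : ℝ) ^ p) * (n : ℝ) ^ 2 := by gcongr; linarith
    _ = 2 * ((n : ℝ) ^ 3 * exp (-b * (n : ℝ) ^ p)) := by ring
    _ ≤ 2 := by linarith

/-- The sum of the first `n` observations `f y (h i)`, each centered by its mean under `ν`: the
empirical process of the sample `h`, indexed by `y`. -/
def centeredSum {E ι : Type*} [MeasurableSpace E] (ν : Measure E) (f : ι → E → ℝ) (h : ℕ → E)
    (n : ℕ) (y : ι) : ℝ :=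
  ∑ i ∈ Finset.range n, (f y (h i) - ∫ x, f y x ∂ν)

section IndependentSample

variable {E ι : Type*} [MeasurableSpace E] {ν : Measure E} [IsProbabilityMeasure ν]

theorem measureReal_abs_centeredSum_ge_le {f : ι → E → ℝ} {y : ι} (hmeas : Measurable (f y))
    (hbound : ∀ x, |f y x| ≤ 1) (n : ℕ) {t : ℝ} (ht : 0 ≤ t) :
    (Measure.infinitePi fun _ : ℕ => ν).real {h | t ≤ |centeredSum ν f h n y|} ≤
      2 * exp (-t ^ 2 / (2 * n)) := by
  have hconst : (‖(1 : ℝ) - -1‖₊ / 2) ^ 2 = 1 := by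
    rw [← NNReal.coe_inj]
    norm_num
  have hsub : HasSubgaussianMGF (fun x => f y x - ∫ x, f y x ∂ν) 1 ν :=
    hconst ▸ hasSubgaussianMGF_of_mem_Icc hmeas.aemeasurable
      (.of_forall fun x => abs_le.1 (hbound x))
  have hindep : iIndepFun (fun (i : ℕ) (h : ℕ → E) => f y (h i) - ∫ x, f y x ∂ν)
      (Measure.infinitePi fun _ => ν) :=
    iIndepFun_infinitePi (X := fun _ x => f y x - ∫ x, f y x ∂ν) fun _ => hmeas.sub_const _
  have hcoord (i : ℕ) : HasSubgaussianMGF (fun h : ℕ → E => f y (h i) - ∫ x, f y x ∂ν) 1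
      (Measure.infinitePi fun _ => ν) := by
    have hmap := (measurePreserving_eval_infinitePi (fun _ : ℕ => ν) i).map_eq
    exact .of_map (X := fun x => f y x - ∫ x, f y x ∂ν) (measurable_pi_apply i).aemeasurable
      (hmap.symm ▸ hsub)
  simpa only [centeredSum, NNReal.coe_one, mul_one] using
    measureReal_abs_sum_range_ge_le_of_iIndepFun hindep hcoord n ht

theorem ae_eventually_abs_centeredSum_lt {f : ι → E → ℝ} (hmeas : ∀ y, Measurable (f y))
    (hbound : ∀ y x, |f y x| ≤ 1) (s : ℕ → Finset ι) (hs : ∀ n, (s n).card ≤ n + 1) {ε : ℝ}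
    (hε : 0 < ε) :
    ∀ᵐ h ∂Measure.infinitePi fun _ : ℕ => ν, ∀ᶠ n : ℕ in atTop, ∀ y ∈ s n,
      |centeredSum ν f h n y| < (n : ℝ) ^ (1 / 2 + ε) := by
  set μ := Measure.infinitePi fun _ : ℕ => ν
  set bad : ℕ → Set (ℕ → E) := fun n =>
    ⋃ y ∈ s n, {h | (n : ℝ) ^ (1 / 2 + ε) ≤ |centeredSum ν f h n y|}
  have hexponent (n : ℕ) :
      -((n : ℝ) ^ (1 / 2 + ε)) ^ 2 / (2 * n) = -(1 / 2) * (n : ℝ) ^ (2 * ε) := by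
    rcases n.eq_zero_or_pos with rfl | hn
    · rw [Nat.cast_zero, mul_zero, div_zero, zero_rpow (by positivity), mul_zero]
    · have hn : (0 : ℝ) < n := by exact_mod_cast hn
      rw [← rpow_mul_natCast hn.le, show (1 / 2 + ε) * (2 : ℕ) = 1 + 2 * ε by push_cast; ring,
        rpow_add hn, rpow_one]
      field_simp
  have hmeasure (n : ℕ) : μ (bad n) ≤
      ENNReal.ofReal (2 * (((n : ℝ) + 1) * exp (-(1 / 2) * (n : ℝ) ^ (2 * ε)))) := by
    refine ENNReal.le_ofReal_iff_toReal_le (measure_ne_top _ _) (by positivity) |>.2 ?_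
    refine (measureReal_biUnion_finset_le _ _).trans ?_
    refine (Finset.sum_le_card_nsmul _ _ _ fun y _ =>
      measureReal_abs_centeredSum_ge_le (hmeas y) (hbound y) n (by positivity)).trans ?_
    rw [hexponent, nsmul_eq_mul, mul_left_comm]
    gcongr
    exact_mod_cast hs n
  have hsum : ∑' n, μ (bad n) ≠ ∞ := ne_top_of_le_ne_top
    ((summable_succ_mul_exp_neg_mul_rpow one_half_pos
      (mul_pos two_pos hε)).mul_left 2).tsum_ofReal_ne_top (ENNReal.tsum_le_tsum hmeasure)
  filter_upwards [ae_eventually_notMem hsum] with h hh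
  filter_upwards [hh] with n hn y hy
  by_contra! hge
  exact hn (Set.mem_biUnion hy hge)

theorem lipschitzWith_centeredSum {f : ℝ → E → ℝ} {L : ℝ≥0} (hmeas : ∀ y, Measurable (f y))
    (hbound : ∀ y x, |f y x| ≤ 1) (hlip : ∀ x, LipschitzWith L fun y => f y x) (h : ℕ → E)
    (n : ℕ) : LipschitzWith (2 * L * n) (centeredSum ν f h n) := by
  have hint (y : ℝ) : Integrable (f y) ν :=
    .of_bound (hmeas y).aestronglyMeasurable 1 (.of_forall (hbound y))
  refine LipschitzWith.of_dist_le_mul fun y z => ?_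
  have hterm (x : E) : ‖f y x - f z x‖ ≤ L * dist y z := (hlip x).dist_le_mul y z
  have hmean : ‖(∫ x, f y x ∂ν) - ∫ x, f z x ∂ν‖ ≤ L * dist y z := by
    rw [← integral_sub (hint y) (hint z)]
    simpa using norm_integral_le_of_norm_le_const (μ := ν) (.of_forall hterm)
  rw [Real.dist_eq, centeredSum, centeredSum, ← Finset.sum_sub_distrib]
  refine (Finset.abs_sum_le_sum_abs _ _).trans
    ((Finset.sum_le_card_nsmul _ _ (2 * L * dist y z) fun i _ => ?_).trans_eq ?_)
  · rw [sub_sub_sub_comm]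
    have htriangle := norm_sub_le (f y (h i) - f z (h i)) ((∫ x, f y x ∂ν) - ∫ x, f z x ∂ν)
    rw [← norm_eq_abs]
    linarith [hterm (h i)]
  · rw [Finset.card_range, nsmul_eq_mul]
    push_cast
    ring

end IndependentSample

/-- The `n + 1` equidistant points of `[-R, R]`. -/
def uniformGrid (R : ℝ) (n : ℕ) : Finset ℝ :=
  (Finset.range (n + 1)).image fun j : ℕ => -R + 2 * R / n * j

theorem card_uniformGrid_le (R : ℝ) (n : ℕ) : (uniformGrid R n).card ≤ n + 1 :=
  Finset.card_image_le.trans_eq (Finset.card_range _)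

theorem exists_mem_uniformGrid_dist_le {R : ℝ} (hR : 0 < R) {n : ℕ} (hn : n ≠ 0) {y : ℝ}
    (hy : |y| ≤ R) : ∃ z ∈ uniformGrid R n, dist y z ≤ 2 * R / n := by
  have hδ : 0 < 2 * R / n := by positivity
  obtain ⟨hRy, hyR⟩ := abs_le.1 hy
  have hsteps : 0 ≤ (y + R) / (2 * R / n) := div_nonneg (by linarith) hδ.le
  have hlast : (y + R) / (2 * R / n) ≤ n := by
    rw [div_le_iff₀ hδ, mul_div_cancel₀ _ (by positivity)]
    linarith
  have hfloor := (le_div_iff₀ hδ).1 (Nat.floor_le hsteps)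
  have hceil := (div_lt_iff₀ hδ).1 (Nat.lt_floor_add_one ((y + R) / (2 * R / n)))
  refine ⟨_, Finset.mem_image_of_mem _ (Finset.mem_range.2
    (Nat.lt_succ_of_le (Nat.floor_le_of_le hlast))), ?_⟩
  rw [Real.dist_eq, abs_le]
  constructor <;> linarith

theorem abs_le_of_abs_le_on_uniformGrid {g : ℝ → ℝ} {K : ℝ≥0} (hg : LipschitzWith K g) {B R : ℝ}
    (hR : 0 < R) {n : ℕ} (hn : n ≠ 0) (hgrid : ∀ z ∈ uniformGrid R n, |g z| ≤ B) {y : ℝ}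
    (hy : |y| ≤ R) : |g y| ≤ B + K * (2 * R / n) := by
  obtain ⟨z, hz, hyz⟩ := exists_mem_uniformGrid_dist_le hR hn hy
  have hdist : |g y - g z| ≤ K * (2 * R / n) :=
    (hg.dist_le_mul y z).trans (mul_le_mul_of_nonneg_left hyz K.2)
  linarith [abs_sub_abs_le_abs_sub (g y) (g z), hgrid z hz]

-- Lipschitz continuity reduces the supremum over `[-R, R]` to the points of a grid.
theorem ae_eventually_forall_abs_centeredSum_le {E : Type*} [MeasurableSpace E] (ν : Measure E)
    [IsProbabilityMeasure ν] {f : ℝ → E → ℝ} {L : ℝ≥0} (hmeas : ∀ y, Measurable (f y))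
    (hbound : ∀ y x, |f y x| ≤ 1) (hlip : ∀ x, LipschitzWith L fun y => f y x) :
    ∀ᵐ h ∂Measure.infinitePi fun _ : ℕ => ν, ∀ R ε : ℝ, 0 < ε → ∀ᶠ n : ℕ in atTop,
      ∀ y, |y| ≤ R → |centeredSum ν f h n y| ≤ (n : ℝ) ^ (1 / 2 + ε) := by
  have hgrid : ∀ᵐ h ∂Measure.infinitePi fun _ : ℕ => ν, ∀ N j : ℕ, ∀ᶠ n : ℕ in atTop,
      ∀ z ∈ uniformGrid ((N : ℝ) + 1) n,
        |centeredSum ν f h n z| < (n : ℝ) ^ (1 / 2 + 1 / ((j : ℝ) + 1)) :=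
    ae_all_iff.2 fun N => ae_all_iff.2 fun j =>
      ae_eventually_abs_centeredSum_lt hmeas hbound _ (card_uniformGrid_le _) (by positivity)
  filter_upwards [hgrid] with h hh R ε hε
  obtain ⟨N, hN⟩ := exists_nat_ge R
  obtain ⟨j, hj⟩ := exists_nat_one_div_lt hε
  set δ := 1 / ((j : ℝ) + 1)
  have : 0 < δ := by positivity
  have hgrow {p : ℝ} (hp : 0 < p) : Tendsto (fun n : ℕ => (n : ℝ) ^ p) atTop atTop :=
    (tendsto_rpow_atTop hp).comp tendsto_natCast_atTop_atTop
  filter_upwards [hh N j, (hgrow (by positivity : 0 < 1 / 2 + δ)).eventually_ge_atTop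
    (4 * L * (N + 1)), (hgrow (sub_pos.2 hj)).eventually_ge_atTop 2, eventually_ne_atTop 0]
    with n hn hlarge htwo hn0 y hy
  have hn0' : (0 : ℝ) < n := by positivity
  calc |centeredSum ν f h n y|
      ≤ (n : ℝ) ^ (1 / 2 + δ) + ((2 * L * n : ℝ≥0) : ℝ) * (2 * ((N : ℝ) + 1) / n) :=
        abs_le_of_abs_le_on_uniformGrid (lipschitzWith_centeredSum hmeas hbound hlip h n)
          (by positivity) hn0 (fun z hz => (hn z hz).le) (by linarith)
    _ = (n : ℝ) ^ (1 / 2 + δ) + 4 * L * (N + 1) := by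
        push_cast
        field_simp
        ring
    _ ≤ (n : ℝ) ^ (1 / 2 + δ) * 2 := by linarith
    _ ≤ (n : ℝ) ^ (1 / 2 + δ) * (n : ℝ) ^ (ε - δ) := by gcongr
    _ = (n : ℝ) ^ (1 / 2 + ε) := by
        rw [← rpow_add hn0']
        ring_nf

end UniformLawOfLargeNumbers

section Gaussian

theorem exp_mul_sub_sq_eq {b : ℝ} (hb : b ≠ 0) (A c : ℝ) :
    (fun y => exp (A * y - b * (y - c) ^ 2)) = fun y =>
      exp (A * c + A ^ 2 / (4 * b)) * exp (-b * (y - (c + A / (2 * b))) ^ 2) := by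
  ext y
  rw [← exp_add]
  congr 1
  field_simp
  ring

theorem integrable_exp_mul_sub_sq {b : ℝ} (hb : 0 < b) (A c : ℝ) :
    Integrable fun y => exp (A * y - b * (y - c) ^ 2) := by
  rw [exp_mul_sub_sq_eq hb.ne']
  exact ((integrable_exp_neg_mul_sq hb).comp_sub_right _).const_mul _

theorem integral_exp_mul_sub_sq {b : ℝ} (hb : 0 < b) (A c : ℝ) :
    ∫ y, exp (A * y - b * (y - c) ^ 2) = exp (A * c + A ^ 2 / (4 * b)) * √(π / b) := by
  rw [exp_mul_sub_sq_eq hb.ne', integral_const_mul,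
    integral_sub_right_eq_self (fun y => exp (-b * y ^ 2)), integral_gaussian]

end Gaussian

section GibbsMeasure

variable (β : ℝ) (h : ℕ → ℝ) (n : ℕ)

theorem gibbsWeight_pos (σ : Fin n → Bool) : 0 < gibbsWeight β h n σ := exp_pos _

/-- The normalizing constant of the Gibbs measure. -/
def partitionFunction : ℝ := ∑ σ, gibbsWeight β h n σ

theorem partitionFunction_pos : 0 < partitionFunction β h n :=
  Finset.sum_pos (fun σ _ => gibbsWeight_pos β h n σ) Finset.univ_nonempty

instance isProbabilityMeasure_gibbsMeasure : IsProbabilityMeasure (gibbsMeasure β h n) where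
  measure_univ := by
    simp only [gibbsMeasure, Measure.smul_apply, Measure.finsetSum_apply, smul_eq_mul,
      measure_univ, mul_one]
    rw [← ENNReal.ofReal_sum_of_nonneg fun σ _ => (gibbsWeight_pos β h n σ).le]
    exact ENNReal.inv_mul_cancel (ENNReal.ofReal_pos.2 (partitionFunction_pos β h n)).ne'
      ENNReal.ofReal_ne_top

theorem integral_gibbsMeasure (f : (Fin n → Bool) → ℝ) :
    ∫ σ, f σ ∂gibbsMeasure β h n =
      (partitionFunction β h n)⁻¹ * ∑ σ, gibbsWeight β h n σ * f σ := by
  rw [gibbsMeasure, integral_smul_measure, integral_finsetSum_measure fun σ _ =>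
    (Integrable.of_finite (μ := Measure.dirac σ)).smul_measure ENNReal.ofReal_ne_top,
    ← partitionFunction, ENNReal.toReal_inv, ENNReal.toReal_ofReal (partitionFunction_pos β h n).le]
  simp only [integral_smul_measure, integral_dirac, smul_eq_mul,
    ENNReal.toReal_ofReal (gibbsWeight_pos β h n _).le]

end GibbsMeasure

section HubbardStratonovich

theorem prod_two_mul_cosh {n : ℕ} (a : Fin n → ℝ) :
    ∏ i, 2 * cosh (a i) = ∑ σ : Fin n → Bool, exp (∑ i, a i * spin (σ i)) := by
  have hspin (x : ℝ) : 2 * cosh x = ∑ b : Bool, exp (x * spin b) := by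
    rw [cosh_eq, Fintype.sum_bool]
    simp only [spin, if_true, Bool.false_eq_true, if_false]
    ring_nf
  simp only [hspin, Finset.prod_univ_sum, Fintype.piFinset_univ, exp_sum]

variable {β : ℝ} (h : ℕ → ℝ) {n : ℕ}

theorem exp_neg_mul_Gn (hn : n ≠ 0) (y : ℝ) :
    exp (-(n * Gn β h n y)) =
      (2 ^ n)⁻¹ * ∑ σ, gibbsWeight β h n σ * exp (-(n * β / 2 * (y - mag σ / n) ^ 2)) := by
  have hn' : (n : ℝ) ≠ 0 := Nat.cast_ne_zero.2 hn
  have hcosh : exp (-(n * Gn β h n y)) =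
      (2 ^ n)⁻¹ * (exp (-(n * β / 2 * y ^ 2)) * ∏ i : Fin n, 2 * cosh (β * (y + h i))) := by
    rw [Finset.prod_mul_distrib, Finset.prod_const, Finset.card_univ, Fintype.card_fin,
      mul_left_comm _ (2 ^ n : ℝ), inv_mul_cancel_left₀ (by positivity),
      ← Finset.prod_congr rfl fun (i : Fin n) _ => exp_log (cosh_pos (β * (y + h i))), ← exp_sum,
      ← exp_add, Gn]
    congr 1
    field_simp
    ring
  rw [hcosh, prod_two_mul_cosh, Finset.mul_sum]
  congr 1
  refine Finset.sum_congr rfl fun σ _ => ?_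
  have hsum : ∑ i : Fin n, β * (y + h i) * spin (σ i) =
      β * y * mag σ + β * ∑ i : Fin n, h i * spin (σ i) := by
    rw [mag, Finset.mul_sum, Finset.mul_sum, ← Finset.sum_add_distrib]
    exact Finset.sum_congr rfl fun i _ => by ring
  rw [gibbsWeight, hsum, ← exp_add, ← exp_add]
  congr 1
  field_simp
  ring

theorem exp_mul_sub_mul_Gn (hn : n ≠ 0) (A : ℝ) :
    (fun y => exp (A * y - n * Gn β h n y)) = fun y => (2 ^ n)⁻¹ *
      ∑ σ, gibbsWeight β h n σ * exp (A * y - n * β / 2 * (y - mag σ / n) ^ 2) := by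
  ext y
  rw [sub_eq_add_neg, exp_add, exp_neg_mul_Gn h hn, mul_left_comm, Finset.mul_sum]
  simp only [mul_left_comm (exp (A * y)), ← exp_add, ← sub_eq_add_neg]

theorem integrable_exp_mul_sub_mul_Gn (hβ : 0 < β) (hn : n ≠ 0) (A : ℝ) :
    Integrable fun y => exp (A * y - n * Gn β h n y) := by
  rw [exp_mul_sub_mul_Gn h hn]
  exact (integrable_finsetSum _ fun σ _ =>
    (integrable_exp_mul_sub_sq (by positivity) _ _).const_mul _).const_mul _

-- Convolving the law of `mag / n` with a centered Gaussian of variance `1 / (n β)` produces the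
-- density `exp (-n Gn)` up to normalization.
theorem integral_exp_mul_sub_mul_Gn (hβ : 0 < β) (hn : n ≠ 0) (t : ℝ) :
    ∫ y, exp (n * t * y - n * Gn β h n y) = (2 ^ n)⁻¹ * √(π / (n * β / 2)) *
      partitionFunction β h n * exp (n * t ^ 2 / (2 * β)) * mgf mag (gibbsMeasure β h n) t := by
  have hn' : (n : ℝ) ≠ 0 := Nat.cast_ne_zero.2 hn
  have hb : 0 < n * β / 2 := by positivity
  have hexponent (σ : Fin n → Bool) : exp (n * t * (mag σ / n) + (n * t) ^ 2 / (4 * (n * β / 2))) =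
      exp (n * t ^ 2 / (2 * β)) * exp (t * mag σ) := by
    rw [← exp_add]
    congr 1
    field_simp
    ring
  rw [exp_mul_sub_mul_Gn h hn, integral_const_mul, integral_finsetSum _ fun σ _ =>
    (integrable_exp_mul_sub_sq hb _ _).const_mul _, mgf, integral_gibbsMeasure]
  simp only [integral_const_mul, integral_exp_mul_sub_sq hb, hexponent]
  have hcancel (E S : ℝ) :
      partitionFunction β h n * E * ((partitionFunction β h n)⁻¹ * S) = E * S := by
    have := (partitionFunction_pos β h n).ne'
    field_simp
  rw [mul_assoc _ (partitionFunction β h n), mul_assoc _ (partitionFunction β h n * _), hcancel,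
    Finset.mul_sum, Finset.mul_sum, Finset.mul_sum]
  exact Finset.sum_congr rfl fun σ _ => by ring

theorem integral_exp_mul_sub_mul_Gn_rescale (m A : ℝ) {w : ℝ} (hw : 0 < w) :
    ∫ y, exp (A * y - n * Gn β h n y) = w * exp (A * m - n * Gn β h n m) *
      ∫ s, exp (A * w * s - n * (Gn β h n (m + w * s) - Gn β h n m)) := by
  have hsub := Measure.integral_comp_mul_left (fun s => exp (A * (m + s) - n * Gn β h n (m + s))) w
  rw [integral_add_left_eq_self (fun y => exp (A * y - n * Gn β h n y)), smul_eq_mul,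
    abs_of_pos (inv_pos.2 hw)] at hsub
  rw [mul_assoc, ← integral_const_mul, ← inv_mul_eq_iff_eq_mul₀ hw.ne', ← hsub]
  refine integral_congr_ae (.of_forall fun s => ?_)
  simp only [← exp_add]
  ring_nf

theorem integrable_exp_mul_sub_mul_Gn_rescale (hβ : 0 < β) (hn : n ≠ 0) (m A : ℝ) {w : ℝ}
    (hw : w ≠ 0) :
    Integrable fun s => exp (A * s - n * (Gn β h n (m + w * s) - Gn β h n m)) := by
  have hscaled := (((integrable_exp_mul_sub_mul_Gn h hβ hn (A / w)).comp_add_left m).comp_mul_left'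
    hw).mul_const (exp (n * Gn β h n m - A / w * m))
  refine hscaled.congr (.of_forall fun s => ?_)
  simp only [← exp_add]
  congr 1
  field_simp
  ring

theorem mgf_mag_sub_gibbsMeasure (m t : ℝ) :
    mgf (fun σ => mag σ - n * m) (gibbsMeasure β h n) t =
      exp (-(n * t * m)) * mgf mag (gibbsMeasure β h n) t := by
  rw [mgf, mgf, ← integral_const_mul]
  refine integral_congr_ae (.of_forall fun σ => ?_)
  simp only [← exp_add]
  ring_nf

theorem cgf_mag_sub_gibbsMeasure (hβ : 0 < β) (hn : n ≠ 0) (m t : ℝ) {w : ℝ} (hw : 0 < w) :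
    cgf (fun σ => mag σ - n * m) (gibbsMeasure β h n) t =
      log (∫ s, exp (n * t * w * s - n * (Gn β h n (m + w * s) - Gn β h n m))) -
        log (∫ s, exp (-(n * (Gn β h n (m + w * s) - Gn β h n m)))) - n * t ^ 2 / (2 * β) := by
  have hpos (t : ℝ) :
      0 < ∫ s, exp (n * t * w * s - n * (Gn β h n (m + w * s) - Gn β h n m)) :=
    integral_exp_pos (integrable_exp_mul_sub_mul_Gn_rescale h hβ hn m _ hw.ne')
  have hkey (t : ℝ) : log (∫ s, exp (n * t * w * s - n * (Gn β h n (m + w * s) - Gn β h n m))) +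
      (log w - n * Gn β h n m) = log ((2 ^ n)⁻¹ * √(π / (n * β / 2)) * partitionFunction β h n) +
        n * t ^ 2 / (2 * β) + cgf (fun σ => mag σ - n * m) (gibbsMeasure β h n) t := by
    have hscaled : w * exp (-(n * Gn β h n m)) *
        ∫ s, exp (n * t * w * s - n * (Gn β h n (m + w * s) - Gn β h n m)) =
        (2 ^ n)⁻¹ * √(π / (n * β / 2)) * partitionFunction β h n * exp (n * t ^ 2 / (2 * β)) *
          mgf (fun σ => mag σ - n * m) (gibbsMeasure β h n) t := by
      rw [mgf_mag_sub_gibbsMeasure, mul_left_comm, ← integral_exp_mul_sub_mul_Gn h hβ hn,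
        integral_exp_mul_sub_mul_Gn_rescale h m _ hw, sub_eq_add_neg, exp_add, exp_neg (n * t * m)]
      field_simp
    have hlog := congrArg log hscaled
    have hC : 0 < (2 ^ n : ℝ)⁻¹ * √(π / (n * β / 2)) * partitionFunction β h n :=
      mul_pos (by positivity) (partitionFunction_pos β h n)
    rw [log_mul (by positivity) (hpos t).ne', log_mul hw.ne' (exp_ne_zero _), log_exp,
      log_mul (by positivity) (mgf_pos .of_finite).ne', log_mul hC.ne' (exp_ne_zero _),
      log_exp] at hlog
    rw [cgf]
    linarith
  have hzero := hkey 0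
  simp only [mul_zero, zero_mul, zero_sub, cgf_zero] at hzero
  linear_combination hzero - hkey t

end HubbardStratonovich

section LaplacePrinciple

variable {E ι : Type*} [NormedAddCommGroup E] [ProperSpace E] [MeasurableSpace E]
  {μ : Measure E} {l : Filter ι} {a : ι → ℝ} {f : ι → E → ℝ} {φ : E → ℝ} {x₀ : E}

theorem eventually_integral_exp_mul_le (ha : Tendsto a l atTop)
    (hμ : Integrable (fun x => exp (-‖x‖)) μ) (hf : TendstoLocallyUniformly f φ l)
    (hmax : ∀ x, φ x ≤ φ x₀) {R : ℝ} (htail : ∀ᶠ i in l, ∀ x, R ≤ ‖x‖ → f i x ≤ φ x₀ - ‖x‖)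
    {ε : ℝ} (hε : 0 < ε) :
    ∀ᶠ i in l, ∫ x, exp (a i * f i x) ∂μ ≤
      exp (a i * (φ x₀ + ε)) * (exp |R| * ∫ x, exp (-‖x‖) ∂μ) := by
  have hunif := Metric.tendstoUniformlyOn_iff.1
    (tendstoLocallyUniformly_iff_forall_isCompact.1 hf _ (isCompact_closedBall 0 R)) ε hε
  filter_upwards [hunif, htail, ha.eventually_ge_atTop 1] with i hball hout hi
  rw [← integral_const_mul, ← integral_const_mul]
  refine integral_mono_of_nonneg (.of_forall fun x => (exp_pos _).le)
    ((hμ.const_mul _).const_mul _) (.of_forall fun x => ?_)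
  simp only [← exp_add]
  refine exp_le_exp.2 ?_
  rcases le_total ‖x‖ R with hx | hx
  · have hnear := hball x (mem_closedBall_zero_iff.2 hx)
    rw [dist_comm, Real.dist_eq] at hnear
    have : a i * f i x ≤ a i * (φ x₀ + ε) :=
      mul_le_mul_of_nonneg_left (by linarith [(abs_lt.1 hnear).2, hmax x]) (by linarith)
    linarith [le_abs_self R]
  · have : a i * f i x ≤ a i * (φ x₀ + ε - ‖x‖) :=
      mul_le_mul_of_nonneg_left (by linarith [hout x hx]) (by linarith)
    have : ‖x‖ ≤ a i * ‖x‖ := le_mul_of_one_le_left (norm_nonneg x) hi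
    linarith [abs_nonneg R]

theorem eventually_le_integral_exp_mul [OpensMeasurableSpace E] [IsFiniteMeasureOnCompacts μ]
    (ha : ∀ᶠ i in l, 0 ≤ a i) (hφ : ContinuousAt φ x₀) (hf : TendstoLocallyUniformly f φ l)
    (hint : ∀ᶠ i in l, Integrable (fun x => exp (a i * f i x)) μ) {ε : ℝ} (hε : 0 < ε) :
    ∃ δ > 0, ∀ᶠ i in l,
      exp (a i * (φ x₀ - ε)) * μ.real (Metric.closedBall x₀ δ) ≤ ∫ x, exp (a i * f i x) ∂μ := by
  obtain ⟨δ, hδ, hnear⟩ := Metric.nhds_basis_closedBall.eventually_iff.1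
    (hφ.eventually (lt_mem_nhds (show φ x₀ - ε / 2 < φ x₀ by linarith)))
  have hcompact := isCompact_closedBall x₀ δ
  have hunif := Metric.tendstoUniformlyOn_iff.1
    (tendstoLocallyUniformly_iff_forall_isCompact.1 hf _ hcompact) (ε / 2) (half_pos hε)
  refine ⟨δ, hδ, ?_⟩
  filter_upwards [hunif, ha, hint] with i hball hi hinti
  calc exp (a i * (φ x₀ - ε)) * μ.real (Metric.closedBall x₀ δ)
      = ∫ _ in Metric.closedBall x₀ δ, exp (a i * (φ x₀ - ε)) ∂μ := by
        rw [setIntegral_const, smul_eq_mul, mul_comm]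
    _ ≤ ∫ x in Metric.closedBall x₀ δ, exp (a i * f i x) ∂μ := by
        refine setIntegral_mono_on (integrableOn_const hcompact.measure_ne_top)
          hinti.integrableOn Metric.isClosed_closedBall.measurableSet fun x hx => exp_le_exp.2 ?_
        have hdist := hball x hx
        rw [dist_comm, Real.dist_eq] at hdist
        exact mul_le_mul_of_nonneg_left (by linarith [(abs_lt.1 hdist).1, hnear hx]) hi
    _ ≤ ∫ x, exp (a i * f i x) ∂μ :=
        setIntegral_le_integral hinti (.of_forall fun x => (exp_pos _).le)

theorem tendsto_inv_mul_log_integral_exp_mul [OpensMeasurableSpace E]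
    [IsFiniteMeasureOnCompacts μ] [μ.IsOpenPosMeasure] (ha : Tendsto a l atTop)
    (hμ : Integrable (fun x => exp (-‖x‖)) μ) (hφ : ContinuousAt φ x₀)
    (hf : TendstoLocallyUniformly f φ l) (hmax : ∀ x, φ x ≤ φ x₀) {R : ℝ}
    (htail : ∀ᶠ i in l, ∀ x, R ≤ ‖x‖ → f i x ≤ φ x₀ - ‖x‖)
    (hint : ∀ᶠ i in l, Integrable (fun x => exp (a i * f i x)) μ) :
    Tendsto (fun i => (a i)⁻¹ * log (∫ x, exp (a i * f i x) ∂μ)) l (𝓝 (φ x₀)) := by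
  have hlog {i : ι} (hi : 0 < a i) {c v : ℝ} (hv : 0 < v) :
      log (exp (a i * c) * v) = a i * (c + (a i)⁻¹ * log v) := by
    rw [log_mul (exp_ne_zero _) hv.ne', log_exp]
    field_simp
  have hvanish (v c : ℝ) : Tendsto (fun i => c + (a i)⁻¹ * v) l (𝓝 c) := by
    simpa using (ha.inv_tendsto_atTop.mul_const v).const_add c
  have : NeZero μ := ⟨Measure.measure_univ_ne_zero.1 (isOpen_univ.measure_ne_zero μ ⟨x₀, trivial⟩)⟩
  have hV : 0 < exp |R| * ∫ x, exp (-‖x‖) ∂μ := mul_pos (exp_pos _) (integral_exp_pos hμ)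
  refine tendsto_order.2 ⟨fun c hc => ?_, fun c hc => ?_⟩
  · obtain ⟨δ, hδ, hlower⟩ := eventually_le_integral_exp_mul (ha.eventually_ge_atTop 0) hφ hf hint
      (half_pos (sub_pos.2 hc))
    have hball : 0 < μ.real (Metric.closedBall x₀ δ) := ENNReal.toReal_pos
      (Metric.measure_closedBall_pos μ x₀ hδ).ne' (isCompact_closedBall x₀ δ).measure_ne_top
    filter_upwards [hlower, ha.eventually_gt_atTop 0, (hvanish (log (μ.real
      (Metric.closedBall x₀ δ))) (φ x₀ - (φ x₀ - c) / 2)).eventually_const_lt (by linarith : c < _)]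
      with i hi hai hci
    rw [← div_eq_inv_mul, lt_div_iff₀' hai]
    refine (mul_lt_mul_of_pos_left hci hai).trans_le ?_
    rw [← hlog hai hball]
    exact log_le_log (by positivity) hi
  · have hupper := eventually_integral_exp_mul_le ha hμ hf hmax htail (half_pos (sub_pos.2 hc))
    filter_upwards [hupper, ha.eventually_gt_atTop 0, hint, (hvanish (log (exp |R| * ∫ x,
      exp (-‖x‖) ∂μ)) (φ x₀ + (c - φ x₀) / 2)).eventually_lt_const (by linarith : _ < c)]
      with i hi hai hinti hci
    rw [← div_eq_inv_mul, div_lt_iff₀' hai]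
    refine lt_of_le_of_lt ?_ (mul_lt_mul_of_pos_left hci hai)
    rw [← hlog hai hV]
    exact log_le_log (integral_exp_pos hinti) hi

theorem integrable_exp_neg_abs : Integrable fun x : ℝ => exp (-|x|) := by
  have hpos : IntegrableOn (fun x : ℝ => exp (-|x|)) (Set.Ioi 0) :=
    (integrableOn_exp_neg_Ioi 0).congr_fun (fun x hx => by
      simp only [abs_of_pos (Set.mem_Ioi.1 hx)]) measurableSet_Ioi
  have hneg : IntegrableOn (fun x : ℝ => exp (-|x|)) (Set.Iic 0) :=
    (integrableOn_exp_Iic 0).congr_fun (fun x hx => by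
      simp only [abs_of_nonpos (Set.mem_Iic.1 hx), neg_neg]) measurableSet_Iic
  exact integrableOn_univ.1 (Set.Iic_union_Ioi (a := (0 : ℝ)) ▸ hneg.union hpos)

end LaplacePrinciple

section StrictConvexity

theorem add_mul_sub_lt_of_strictConvexOn {S : Set ℝ} {f : ℝ → ℝ} {f' x y : ℝ}
    (hf : StrictConvexOn ℝ S f) (hx : x ∈ S) (hy : y ∈ S) (hxy : y ≠ x) (hf' : HasDerivAt f f' x) :
    f x + f' * (y - x) < f y := by
  rcases hxy.lt_or_gt with hlt | hlt
  · have := hf.slope_lt_of_hasDerivAt hy hx hlt hf'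
    rw [slope_def_field, div_lt_iff₀ (sub_pos.2 hlt)] at this
    linarith
  · have := hf.lt_slope_of_hasDerivAt hx hy hlt hf'
    rw [slope_def_field, lt_div_iff₀ (sub_pos.2 hlt)] at this
    linarith

theorem add_mul_sub_le_of_strictConvexOn {S : Set ℝ} {f : ℝ → ℝ} {f' x y : ℝ}
    (hf : StrictConvexOn ℝ S f) (hx : x ∈ S) (hy : y ∈ S) (hf' : HasDerivAt f f' x) :
    f x + f' * (y - x) ≤ f y := by
  rcases eq_or_ne y x with rfl | hxy
  · simp
  · exact (add_mul_sub_lt_of_strictConvexOn hf hx hy hxy hf').le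

theorem strictConvexOn_mul_pow_even {k : ℕ} (hk : k ≠ 0) {κ : ℝ} (hκ : 0 < κ) :
    StrictConvexOn ℝ Set.univ fun x : ℝ => κ * x ^ (2 * k) := by
  refine ⟨convex_univ, fun x hx y hy hxy a b ha hb hab => ?_⟩
  have := mul_lt_mul_of_pos_left
    (((even_two_mul k).strictConvexOn_pow (by omega)).2 hx hy hxy ha hb hab) hκ
  simp only [smul_eq_mul] at this ⊢
  linarith

theorem hasDerivAt_mul_pow_even (k : ℕ) (κ x : ℝ) :
    HasDerivAt (fun x : ℝ => κ * x ^ (2 * k)) (2 * k * κ * x ^ (2 * k - 1)) x := by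
  refine ((hasDerivAt_pow (2 * k) x).const_mul κ).congr_deriv ?_
  push_cast
  ring

end StrictConvexity

section PotentialWell

/-- `H` is a potential well of order `2 * k` and coefficient `κ` at the origin: it is positive away
from `0`, behaves like `κ u ^ (2 * k)` at `0`, and grows at least quadratically at infinity. -/
structure PotentialWell (k : ℕ) (κ : ℝ) (H : ℝ → ℝ) : Prop where
  continuous : Continuous H
  pos : ∀ u, u ≠ 0 → 0 < H u
  isLittleO : (fun u => H u - κ * u ^ (2 * k)) =o[𝓝 0] fun u => u ^ (2 * k)
  growth : ∃ c > 0, ∃ b, ∀ u, c * u ^ 2 - b * |u| ≤ H u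

/-- The perturbations `D i` are invisible when a well of order `2 * k` is observed at the spatial
scales `w i`: they are uniformly of linear size, and locally `o (w i ^ (2 * k - 1) * |u|)`. -/
structure IsNegligiblePerturbation {ι : Type*} (l : Filter ι) (k : ℕ) (w : ι → ℝ)
    (D : ι → ℝ → ℝ) : Prop where
  exists_le_mul_abs : ∃ b, ∀ᶠ i in l, ∀ u, |D i u| ≤ b * |u|
  eventually_le : ∀ R η, 0 < η → ∀ᶠ i in l, ∀ u, |u| ≤ R → |D i u| ≤ η * w i ^ (2 * k - 1) * |u|

/-- The function `H` seen through a window of width `w` around the origin, with heights measured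
in units of `w ^ (2 * k)`. -/
def blowUp (k : ℕ) (w : ℝ) (H : ℝ → ℝ) (s : ℝ) : ℝ := H (w * s) / w ^ (2 * k)

variable {k : ℕ} {κ : ℝ} {H : ℝ → ℝ}

theorem PotentialWell.exists_mul_sq_le (hH : PotentialWell k κ H) {δ : ℝ} (hδ : 0 < δ) :
    ∃ c > 0, ∀ u, δ ≤ |u| → c * u ^ 2 ≤ H u := by
  obtain ⟨c, hc, b, hgrowth⟩ := hH.growth
  set M := max δ (2 * b / c)
  have : 0 < M := hδ.trans_le (le_max_left _ _)
  have hcompact : IsCompact {u : ℝ | δ ≤ |u| ∧ |u| ≤ M} := by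
    refine (isCompact_closedBall (0 : ℝ) M).of_isClosed_subset
      ((isClosed_le continuous_const continuous_abs).inter
        (isClosed_le continuous_abs continuous_const)) fun u hu => ?_
    simpa using hu.2
  obtain ⟨u₀, hu₀, hmin⟩ := hcompact.exists_isMinOn ⟨δ, by simp [abs_of_pos hδ, M]⟩
    hH.continuous.continuousOn
  have hHu₀ : 0 < H u₀ := hH.pos u₀ (abs_pos.1 (hδ.trans_le hu₀.1))
  refine ⟨min (c / 2) (H u₀ / M ^ 2), by positivity, fun u hu => ?_⟩
  rcases le_total |u| M with huM | huM
  · have hsq : u ^ 2 / M ^ 2 ≤ 1 :=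
      div_le_one_of_le₀ (sq_le_sq.2 (huM.trans (le_abs_self M))) (by positivity)
    calc min (c / 2) (H u₀ / M ^ 2) * u ^ 2
        ≤ H u₀ / M ^ 2 * u ^ 2 := by gcongr; exact min_le_right _ _
      _ = H u₀ * (u ^ 2 / M ^ 2) := by ring
      _ ≤ H u₀ := mul_le_of_le_one_right hHu₀.le hsq
      _ ≤ H u := hmin ⟨hu, huM⟩
  · have hb : b ≤ c / 2 * |u| := by
      have := (div_le_iff₀ hc).1 ((le_max_right _ _).trans huM)
      linarith
    calc min (c / 2) (H u₀ / M ^ 2) * u ^ 2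
        ≤ c / 2 * u ^ 2 := by gcongr; exact min_le_left _ _
      _ = c * u ^ 2 - c / 2 * |u| * |u| := by rw [← sq_abs]; ring
      _ ≤ c * u ^ 2 - b * |u| := by gcongr
      _ ≤ H u := hgrowth u

theorem PotentialWell.exists_mul_pow_le (hH : PotentialWell k κ H) (hκ : 0 < κ) :
    ∃ δ > 0, ∀ u, |u| ≤ δ → κ / 2 * u ^ (2 * k) ≤ H u := by
  obtain ⟨δ, hδ, hnear⟩ := Metric.nhds_basis_closedBall.eventually_iff.1
    (hH.isLittleO.def (half_pos hκ))
  refine ⟨δ, hδ, fun u hu => ?_⟩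
  have := hnear (mem_closedBall_zero_iff.2 hu)
  rw [norm_eq_abs, norm_eq_abs, abs_of_nonneg ((even_two_mul k).pow_nonneg u)] at this
  linarith [(abs_le.1 this).1]

theorem mul_sq_le_blowUp (hk : k ≠ 0) {w c s : ℝ} (hw : 0 < w) (hw1 : w ≤ 1)
    (h : c * (w * s) ^ 2 ≤ H (w * s)) (hc : 0 ≤ c) : c * s ^ 2 ≤ blowUp k w H s := by
  rw [blowUp, le_div_iff₀ (by positivity)]
  calc c * s ^ 2 * w ^ (2 * k) ≤ c * s ^ 2 * w ^ 2 :=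
        mul_le_mul_of_nonneg_left (pow_le_pow_of_le_one hw.le hw1 (by omega)) (by positivity)
    _ = c * (w * s) ^ 2 := by ring
    _ ≤ H (w * s) := h

theorem PotentialWell.exists_mul_sq_le_blowUp (hH : PotentialWell k κ H) (hk : k ≠ 0)
    (hκ : 0 < κ) :
    ∃ c > 0, ∀ w s, 0 < w → w ≤ 1 → 1 ≤ |s| → c * s ^ 2 ≤ blowUp k w H s := by
  obtain ⟨δ, hδ, hnear⟩ := hH.exists_mul_pow_le hκ
  obtain ⟨c, hc, hfar⟩ := hH.exists_mul_sq_le hδ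
  refine ⟨min c (κ / 2), by positivity, fun w s hw hw1 hs => ?_⟩
  rcases le_total |w * s| δ with hws | hws
  · rw [blowUp, le_div_iff₀ (by positivity)]
    calc min c (κ / 2) * s ^ 2 * w ^ (2 * k) ≤ κ / 2 * s ^ (2 * k) * w ^ (2 * k) := by
          gcongr ?_ * _
          rw [pow_mul]
          exact mul_le_mul (min_le_right _ _)
            (le_self_pow₀ ((one_le_sq_iff_one_le_abs s).2 hs) hk) (sq_nonneg s) (by positivity)
      _ = κ / 2 * (w * s) ^ (2 * k) := by ring
      _ ≤ H (w * s) := hnear _ hws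
  · exact (mul_le_mul_of_nonneg_right (min_le_left _ _) (sq_nonneg s)).trans
      (mul_sq_le_blowUp hk hw hw1 (hfar _ hws) hc.le)

variable {ι : Type*} {l : Filter ι} {w : ι → ℝ} {Hn : ι → ℝ → ℝ}

theorem IsNegligiblePerturbation.eventually_abs_blowUp_sub_le (hk : k ≠ 0)
    (hD : IsNegligiblePerturbation l k w fun i u => Hn i u - H u) (hw : ∀ᶠ i in l, 0 < w i) (R : ℝ)
    {η : ℝ} (hη : 0 < η) :
    ∀ᶠ i in l, ∀ s, |w i * s| ≤ R → |blowUp k (w i) (Hn i) s - blowUp k (w i) H s| ≤ η * |s| := by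
  filter_upwards [hD.eventually_le R η hη, hw] with i hi hwi s hs
  rw [blowUp, blowUp, ← sub_div, abs_div, abs_of_pos (pow_pos hwi _), div_le_iff₀ (by positivity)]
  refine (hi _ hs).trans_eq ?_
  rw [abs_mul, abs_of_pos hwi, ← mul_pow_sub_one (by omega : 2 * k ≠ 0) (w i)]
  ring

theorem abs_blowUp_sub_le {w c s : ℝ} (hw : w ≠ 0)
    (h : |H (w * s) - κ * (w * s) ^ (2 * k)| ≤ c * |(w * s) ^ (2 * k)|) :
    |blowUp k w H s - κ * s ^ (2 * k)| ≤ c * s ^ (2 * k) := by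
  have hpos : 0 < w ^ (2 * k) := (even_two_mul k).pow_pos hw
  have hdiff : blowUp k w H s - κ * s ^ (2 * k) =
      (H (w * s) - κ * (w * s) ^ (2 * k)) / w ^ (2 * k) := by
    rw [blowUp, mul_pow]
    field_simp
  rw [abs_of_nonneg ((even_two_mul k).pow_nonneg (w * s))] at h
  rw [hdiff, abs_div, abs_of_pos hpos, div_le_iff₀ hpos]
  exact h.trans_eq (by ring)

theorem PotentialWell.tendstoLocallyUniformly_blowUp (hH : PotentialWell k κ H) (hk : k ≠ 0)
    (hD : IsNegligiblePerturbation l k w fun i u => Hn i u - H u) (hw : Tendsto w l (𝓝[>] 0)) :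
    TendstoLocallyUniformly (fun i => blowUp k (w i) (Hn i)) (fun s => κ * s ^ (2 * k)) l := by
  have hwpos : ∀ᶠ i in l, 0 < w i := hw.eventually self_mem_nhdsWithin
  refine tendstoLocallyUniformly_iff_forall_isCompact.2 fun K hK =>
    Metric.tendstoUniformlyOn_iff.2 fun ε hε => ?_
  obtain ⟨R, hR, hKR⟩ := hK.isBounded.subset_closedBall_lt 0 0
  obtain ⟨δ, hδ, hnear⟩ := Metric.nhds_basis_closedBall.eventually_iff.1
    (hH.isLittleO.def (c := ε / 3 / R ^ (2 * k)) (by positivity))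
  have hwR : ∀ᶠ i in l, w i * R ≤ δ :=
    ((hw.mono_right nhdsWithin_le_nhds).mul_const R).eventually_le_const (by rwa [zero_mul])
  filter_upwards [hwpos, hwR, hD.eventually_abs_blowUp_sub_le hk hwpos δ
    (by positivity : 0 < ε / 3 / R)] with i hwi hwRi hperturb s hs
  have hsR : |s| ≤ R := mem_closedBall_zero_iff.1 (hKR hs)
  have hws : |w i * s| ≤ δ := by
    rw [abs_mul, abs_of_pos hwi]
    exact (mul_le_mul_of_nonneg_left hsR hwi.le).trans hwRi
  have hlinear : ε / 3 / R * |s| ≤ ε / 3 := by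
    rw [div_mul_eq_mul_div, div_le_iff₀ hR]
    gcongr
  have hpower : ε / 3 / R ^ (2 * k) * s ^ (2 * k) ≤ ε / 3 := by
    rw [div_mul_eq_mul_div, div_le_iff₀ (by positivity), ← (even_two_mul k).pow_abs]
    gcongr
  rw [dist_comm, Real.dist_eq]
  have htriangle := abs_sub_le (blowUp k (w i) (Hn i) s) (blowUp k (w i) H s) (κ * s ^ (2 * k))
  linarith [hperturb s hws, abs_blowUp_sub_le hwi.ne' (hnear (mem_closedBall_zero_iff.2 hws))]

theorem PotentialWell.eventually_le_blowUp (hH : PotentialWell k κ H) (hk : k ≠ 0) (hκ : 0 < κ)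
    (hD : IsNegligiblePerturbation l k w fun i u => Hn i u - H u) (hw : Tendsto w l (𝓝[>] 0)) :
    ∃ c > 0, ∀ᶠ i in l, ∀ s, 1 ≤ |s| → c * s ^ 2 - |s| ≤ blowUp k (w i) (Hn i) s := by
  obtain ⟨c₁, hc₁, hlow⟩ := hH.exists_mul_sq_le_blowUp hk hκ
  obtain ⟨c₂, hc₂, hfar⟩ := hH.exists_mul_sq_le one_pos
  obtain ⟨b, hb⟩ := hD.exists_le_mul_abs
  have hwpos : ∀ᶠ i in l, 0 < w i := hw.eventually self_mem_nhdsWithin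
  have hw1 : ∀ᶠ i in l, w i ≤ 1 :=
    (hw.mono_right nhdsWithin_le_nhds).eventually_le_const one_pos
  refine ⟨min c₁ (c₂ / 2), by positivity, ?_⟩
  filter_upwards [hb, hwpos, hw1,
    hD.eventually_abs_blowUp_sub_le hk hwpos (max 1 (2 * b / c₂)) one_pos]
    with i hbi hwi hwi1 hnear s hs
  rcases le_total |w i * s| (max 1 (2 * b / c₂)) with hws | hws
  · have hle : min c₁ (c₂ / 2) * s ^ 2 ≤ c₁ * s ^ 2 := by gcongr; exact min_le_left _ _
    linarith [hlow (w i) s hwi hwi1 hs, (abs_le.1 (hnear s hws)).1]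
  · have hquad : c₂ / 2 * (w i * s) ^ 2 ≤ Hn i (w i * s) := by
      have hbws : b ≤ c₂ / 2 * |w i * s| := by
        have := (div_le_iff₀ hc₂).1 ((le_max_right _ _).trans hws)
        linarith
      have := mul_le_mul_of_nonneg_right hbws (abs_nonneg (w i * s))
      rw [mul_assoc, abs_mul_abs_self, ← sq] at this
      linarith [hfar _ ((le_max_left _ _).trans hws), (abs_le.1 (hbi (w i * s))).1]
    have hle : min c₁ (c₂ / 2) * s ^ 2 ≤ c₂ / 2 * s ^ 2 := by gcongr; exact min_le_right _ _
    linarith [mul_sq_le_blowUp hk hwi hwi1 hquad (by positivity), abs_nonneg s]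

theorem PotentialWell.tendsto_inv_mul_log_integral_exp (hH : PotentialWell k κ H) (hk : k ≠ 0)
    (hκ : 0 < κ) (hD : IsNegligiblePerturbation l k w fun i u => Hn i u - H u)
    (hw : Tendsto w l (𝓝[>] 0)) {a : ι → ℝ} (ha : Tendsto a l atTop) (x : ℝ)
    (hint : ∀ᶠ i in l, Integrable fun s =>
      exp (a i * (2 * k * κ * x ^ (2 * k - 1) * s - blowUp k (w i) (Hn i) s))) :
    Tendsto (fun i => (a i)⁻¹ * log (∫ s,
      exp (a i * (2 * k * κ * x ^ (2 * k - 1) * s - blowUp k (w i) (Hn i) s)))) l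
      (𝓝 ((2 * k - 1) * κ * x ^ (2 * k))) := by
  set θ := 2 * k * κ * x ^ (2 * k - 1)
  have hθx : θ * x = 2 * k * κ * x ^ (2 * k) := by
    rw [← pow_sub_one_mul (by omega : 2 * k ≠ 0) x]
    ring
  have hvalue : θ * x - κ * x ^ (2 * k) = (2 * k - 1) * κ * x ^ (2 * k) := by linear_combination hθx
  have hvalue_nonneg : 0 ≤ θ * x - κ * x ^ (2 * k) := by
    have : (1 : ℝ) ≤ k := mod_cast Nat.one_le_iff_ne_zero.2 hk
    have := (even_two_mul k).pow_nonneg x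
    rw [hvalue]
    exact mul_nonneg (mul_nonneg (by linarith) hκ.le) this
  obtain ⟨c, hc, htail⟩ := hH.eventually_le_blowUp hk hκ hD hw
  rw [← hvalue]
  refine tendsto_inv_mul_log_integral_exp_mul (φ := fun s => θ * s - κ * s ^ (2 * k))
    (R := max 1 ((|θ| + 2) / c)) ha integrable_exp_neg_abs (by fun_prop) ?_ (fun s => ?_) ?_ hint
  · simpa only [Metric.tendstoLocallyUniformly_iff, dist_sub_left] using
      hH.tendstoLocallyUniformly_blowUp hk hD hw
  · have := add_mul_sub_le_of_strictConvexOn (strictConvexOn_mul_pow_even hk hκ) (Set.mem_univ x)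
      (Set.mem_univ s) (hasDerivAt_mul_pow_even k κ x)
    linarith
  · filter_upwards [htail] with i hi s hs
    rw [norm_eq_abs] at hs ⊢
    have hcs : |θ| + 2 ≤ c * |s| := (div_le_iff₀' hc).1 ((le_max_right _ _).trans hs)
    have hquad := mul_le_mul_of_nonneg_right hcs (abs_nonneg s)
    rw [mul_assoc, abs_mul_abs_self, ← sq, add_mul, ← abs_mul] at hquad
    linarith [hi s ((le_max_left _ _).trans hs), le_abs_self (θ * s)]

end PotentialWell

section LargeDeviations

theorem elog_le_coe {x : ℝ≥0∞} {c : ℝ} (h : x ≤ ENNReal.ofReal (exp c)) : elog x ≤ c := by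
  rw [elog]
  split_ifs with hzero htop
  · exact bot_le
  · exact absurd (htop ▸ h) (not_le.2 ENNReal.ofReal_lt_top)
  · exact EReal.coe_le_coe_iff.2 ((log_le_iff_le_exp (ENNReal.toReal_pos hzero htop)).2
      (ENNReal.toReal_le_of_le_ofReal (exp_pos c).le h))

theorem coe_le_elog {x : ℝ≥0∞} {c : ℝ} (h : ENNReal.ofReal (exp c) ≤ x) : c ≤ elog x := by
  rw [elog, if_neg ((ENNReal.ofReal_pos.2 (exp_pos c)).trans_le h).ne']
  split_ifs with htop
  · exact le_top
  · have hexp := (ENNReal.ofReal_le_iff_le_toReal htop).1 h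
    exact EReal.coe_le_coe_iff.2 ((le_log_iff_exp_le ((exp_pos c).trans_le hexp)).2 hexp)

theorem inv_mul_elog_le {x : ℝ≥0∞} {a c : ℝ} (ha : 0 < a) (h : x ≤ ENNReal.ofReal (exp (a * c))) :
    ((a⁻¹ : ℝ) : EReal) * elog x ≤ c := by
  calc ((a⁻¹ : ℝ) : EReal) * elog x ≤ (a⁻¹ : ℝ) * (a * c : ℝ) :=
        mul_le_mul_of_nonneg_left (elog_le_coe h) (EReal.coe_nonneg.2 (inv_pos.2 ha).le)
    _ = c := by rw [← EReal.coe_mul, inv_mul_cancel_left₀ ha.ne']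

theorem le_inv_mul_elog {x : ℝ≥0∞} {a c : ℝ} (ha : 0 < a) (h : ENNReal.ofReal (exp (a * c)) ≤ x) :
    c ≤ ((a⁻¹ : ℝ) : EReal) * elog x := by
  calc (c : EReal) = (a⁻¹ : ℝ) * (a * c : ℝ) := by rw [← EReal.coe_mul, inv_mul_cancel_left₀ ha.ne']
    _ ≤ (a⁻¹ : ℝ) * elog x :=
        mul_le_mul_of_nonneg_left (coe_le_elog h) (EReal.coe_nonneg.2 (inv_pos.2 ha).le)

variable {P : ℕ → Measure ℝ} [∀ n, IsFiniteMeasure (P n)] {a : ℕ → ℝ} {I : ℝ → ℝ}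

theorem hasLDP_of_forall_eventually (ha : Tendsto a atTop atTop) (hcont : Continuous I)
    (hnonneg : ∀ x, 0 ≤ I x) (hcoercive : Tendsto I (cocompact ℝ) atTop)
    (hlower : ∀ U, IsOpen U → ∀ x ∈ U, ∀ c < -I x, ∀ᶠ n in atTop,
      exp (a n * c) ≤ (P n).real U)
    (hupper : ∀ r c, -r < c → ∀ᶠ n in atTop, (P n).real {x | r < I x} ≤ exp (a n * c)) :
    HasLDP P a fun x => ENNReal.ofReal (I x) := by
  have hcoe (x : ℝ) : ((ENNReal.ofReal (I x) : ℝ≥0∞) : EReal) = I x := by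
    rw [EReal.coe_ennreal_ofReal, max_eq_left (hnonneg x)]
  refine ⟨(ENNReal.continuous_ofReal.comp hcont).lowerSemicontinuous, fun c => ?_,
    fun C _ => ⟨?_, ?_⟩⟩
  · obtain ⟨K, hK, hKI⟩ := mem_cocompact.1 (hcoercive.eventually_gt_atTop (max c 0))
    refine hK.of_isClosed_subset
      (isClosed_le (ENNReal.continuous_ofReal.comp hcont) continuous_const) fun x hx => ?_
    by_contra hxK
    exact (hKI hxK).not_ge (le_max_iff.2 (ENNReal.ofReal_le_ofReal_iff'.1 hx))
  · rw [EReal.neg_le]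
    refine le_iInf₂ fun x hx => ?_
    rw [EReal.neg_le, hcoe, ← EReal.coe_neg, ← EReal.ge_of_forall_gt_iff_ge]
    intro c hc
    refine le_liminf_of_le (by isBoundedDefault) ?_
    filter_upwards [ha.eventually_gt_atTop 0,
      hlower _ isOpen_interior x hx c (EReal.coe_lt_coe_iff.1 hc)] with n hn hle
    refine le_inv_mul_elog hn ((ENNReal.ofReal_le_ofReal hle).trans ?_)
    rw [ofReal_measureReal]
    exact measure_mono interior_subset
  · rw [← EReal.le_of_forall_lt_iff_le]
    intro c hc
    obtain ⟨b, hb, hbc⟩ := EReal.lt_iff_exists_real_btwn.1 hc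
    have hsub : C ⊆ {x | -b < I x} := fun x hx => by
      have hbx := hb.trans_le' (EReal.neg_le_neg_iff.2 (iInf₂_le x (subset_closure hx)))
      rw [hcoe, ← EReal.coe_neg, EReal.coe_lt_coe_iff] at hbx
      exact neg_lt.1 hbx
    refine limsup_le_of_le (by isBoundedDefault) ?_
    filter_upwards [ha.eventually_gt_atTop 0,
      hupper (-b) c ((neg_neg b).trans_lt (EReal.coe_lt_coe_iff.1 hbc))] with n hn hle
    refine inv_mul_elog_le hn ((measure_mono hsub).trans ?_)
    rw [← ofReal_measureReal]
    exact ENNReal.ofReal_le_ofReal hle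

end LargeDeviations

section GartnerEllis

variable {P : ℕ → Measure ℝ} {a : ℕ → ℝ} {I : ℝ → ℝ}

theorem setIntegral_exp_mul_le_exp_neg_mul_mgf {μ : Measure ℝ} {A : Set ℝ} {s t c : ℝ}
    (hA : MeasurableSet A) (hs : Integrable (fun y => exp (s * y)) μ)
    (ht : Integrable (fun y => exp (t * y)) μ) (h : ∀ y ∈ A, s * y ≤ t * y - c) :
    ∫ y in A, exp (s * y) ∂μ ≤ exp (-c) * mgf id μ t := by
  calc ∫ y in A, exp (s * y) ∂μ ≤ ∫ y in A, exp (-c) * exp (t * y) ∂μ := by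
        refine setIntegral_mono_on hs.integrableOn (ht.const_mul _).integrableOn hA fun y hy => ?_
        rw [← exp_add]
        exact exp_le_exp.2 (by linarith [h y hy])
    _ ≤ ∫ y, exp (-c) * exp (t * y) ∂μ :=
        setIntegral_le_integral (ht.const_mul _) (.of_forall fun y => by positivity)
    _ = exp (-c) * mgf id μ t := integral_const_mul _ _

theorem eventually_two_mul_exp_mul_le (ha : Tendsto a atTop atTop) {c d : ℝ} (hcd : c < d) :
    ∀ᶠ n in atTop, 2 * exp (a n * c) ≤ exp (a n * d) := by
  filter_upwards [ha.eventually_ge_atTop (log 2 / (d - c))] with n hn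
  rw [div_le_iff₀ (sub_pos.2 hcd)] at hn
  calc 2 * exp (a n * c) = exp (log 2 + a n * c) := by rw [exp_add, exp_log two_pos]
    _ ≤ exp (a n * d) := exp_le_exp.2 (by linarith)

/-- The half-line with endpoint `z` on which the tangent of `I` at `z` lies above the line of slope
`θ` through the same point. -/
def tangentHalfLine (I : ℝ → ℝ) (θ z : ℝ) : Set ℝ := {y | 0 ≤ (deriv I z - θ) * (y - z)}

theorem isClosed_tangentHalfLine (I : ℝ → ℝ) (θ z : ℝ) : IsClosed (tangentHalfLine I θ z) :=
  isClosed_le continuous_const (by fun_prop)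

theorem Ici_subset_tangentHalfLine {θ z : ℝ} (h : θ ≤ deriv I z) :
    Set.Ici z ⊆ tangentHalfLine I θ z :=
  fun _ hy => mul_nonneg (sub_nonneg.2 h) (sub_nonneg.2 hy)

theorem Iic_subset_tangentHalfLine {θ z : ℝ} (h : deriv I z ≤ θ) :
    Set.Iic z ⊆ tangentHalfLine I θ z :=
  fun _ hy => mul_nonneg_of_nonpos_of_nonpos (sub_nonpos.2 h) (sub_nonpos.2 hy)

theorem compl_ball_subset_tangentHalfLine (hI : Monotone (deriv I)) (x : ℝ) {δ : ℝ} (hδ : 0 ≤ δ) :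
    (Metric.ball x δ)ᶜ ⊆
      tangentHalfLine I (deriv I x) (x - δ) ∪ tangentHalfLine I (deriv I x) (x + δ) := by
  intro y hy
  rw [Set.mem_compl_iff, Metric.mem_ball, Real.dist_eq, not_lt, le_abs] at hy
  rcases hy with hy | hy
  · exact .inr (Ici_subset_tangentHalfLine (hI (by linarith)) (Set.mem_Ici.2 (by linarith)))
  · exact .inl (Iic_subset_tangentHalfLine (hI (by linarith)) (Set.mem_Iic.2 (by linarith)))

theorem exists_setOf_lt_subset_tangentHalfLine (hI : ConvexOn ℝ Set.univ I)
    (hdiff : Differentiable ℝ I) (hcoercive : Tendsto I (cocompact ℝ) atTop) {x₀ r : ℝ}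
    (hx₀ : deriv I x₀ = 0) (hr : I x₀ ≤ r) :
    ∃ y z, I y = r ∧ I z = r ∧
      {x | r < I x} ⊆ tangentHalfLine I 0 y ∪ tangentHalfLine I 0 z := by
  have hmono : Monotone (deriv I) :=
    monotoneOn_univ.1 (hI.monotoneOn_deriv fun x _ => hdiff x)
  obtain ⟨y, hy, hyr⟩ := isPreconnected_Iic.intermediate_value_Ici (Set.self_mem_Iic (a := x₀))
    (le_principal_iff.2 (Iic_mem_atBot x₀)) hdiff.continuous.continuousOn
    (hcoercive.mono_left atBot_le_cocompact) hr
  obtain ⟨z, hz, hzr⟩ := isPreconnected_Ici.intermediate_value_Ici (Set.self_mem_Ici (a := x₀))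
    (le_principal_iff.2 (Ici_mem_atTop x₀)) hdiff.continuous.continuousOn
    (hcoercive.mono_left atTop_le_cocompact) hr
  refine ⟨y, z, hyr, hzr, fun x hx => ?_⟩
  have hxyz : x ∉ Set.Icc y z := fun hmem =>
    (hI.le_max_of_mem_Icc trivial trivial hmem).not_gt (by rwa [hyr, hzr, max_self])
  rcases le_total x y with hxy | hxy
  · exact .inl (Iic_subset_tangentHalfLine (hx₀ ▸ hmono hy) hxy)
  · exact .inr (Ici_subset_tangentHalfLine (hx₀ ▸ hmono hz)
      (le_of_not_ge fun hxz => hxyz ⟨hxy, hxz⟩))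

theorem integral_le_add_add_of_compl_subset_union {α : Type*} [MeasurableSpace α] {μ : Measure α}
    {f : α → ℝ} (hf : Integrable f μ) (hf0 : 0 ≤ f) {B s t : Set α} (hcover : Bᶜ ⊆ s ∪ t) :
    ∫ x, f x ∂μ ≤ ∫ x in B, f x ∂μ + (∫ x in s, f x ∂μ + ∫ x in t, f x ∂μ) := by
  have hle : μ ≤ μ.restrict B + (μ.restrict s + μ.restrict t) :=
    calc μ = μ.restrict (B ∪ (s ∪ t)) := by
          rw [Set.compl_subset_iff_union.1 hcover, Measure.restrict_univ]
      _ ≤ μ.restrict B + μ.restrict (s ∪ t) := Measure.restrict_union_le _ _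
      _ ≤ μ.restrict B + (μ.restrict s + μ.restrict t) := by
          gcongr
          exact Measure.restrict_union_le _ _
  have hst : Integrable f (μ.restrict s + μ.restrict t) := hf.restrict.add_measure hf.restrict
  refine (integral_mono_measure hle (.of_forall hf0) (hf.restrict.add_measure hst)).trans_eq ?_
  rw [integral_add_measure hf.restrict hst, integral_add_measure hf.restrict hf.restrict]

variable [∀ n, IsProbabilityMeasure (P n)] (ha : Tendsto a atTop atTop)
  (hint : ∀ n t, Integrable (fun y => exp (t * y)) (P n))
  (hcgf : ∀ x, Tendsto (fun n => (a n)⁻¹ * cgf id (P n) (a n * deriv I x)) atTop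
    (𝓝 (x * deriv I x - I x)))
include ha hint hcgf

theorem eventually_mgf_le {x c : ℝ} (hc : x * deriv I x - I x < c) :
    ∀ᶠ n in atTop, mgf id (P n) (a n * deriv I x) ≤ exp (a n * c) := by
  filter_upwards [(hcgf x).eventually_le_const hc, ha.eventually_gt_atTop 0] with n hn hn0
  rw [← exp_cgf (X := id) (hint n _)]
  exact exp_le_exp.2 ((inv_mul_le_iff₀ hn0).1 hn)

theorem eventually_le_mgf {x c : ℝ} (hc : c < x * deriv I x - I x) :
    ∀ᶠ n in atTop, exp (a n * c) ≤ mgf id (P n) (a n * deriv I x) := by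
  filter_upwards [(hcgf x).eventually_const_le hc, ha.eventually_gt_atTop 0] with n hn hn0
  rw [← exp_cgf (X := id) (hint n _)]
  exact exp_le_exp.2 ((le_inv_mul_iff₀ hn0).1 hn)

-- Chernoff's bound for the measure tilted by `exp (a n * θ * y)`, with the exponent
-- `a n * deriv I z` that is optimal at the endpoint `z`.
theorem eventually_setIntegral_tangentHalfLine_le (θ : ℝ) {z c : ℝ} (hc : θ * z - I z < c) :
    ∀ᶠ n in atTop, ∫ y in tangentHalfLine I θ z, exp (a n * θ * y) ∂P n ≤ exp (a n * c) := by
  have hmgf := eventually_mgf_le ha hint hcgf (x := z) (c := c + (deriv I z - θ) * z)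
    (by linarith)
  filter_upwards [hmgf, ha.eventually_ge_atTop 0] with n hn hn0
  calc ∫ y in tangentHalfLine I θ z, exp (a n * θ * y) ∂P n
      ≤ exp (-(a n * ((deriv I z - θ) * z))) * mgf id (P n) (a n * deriv I z) := by
        refine setIntegral_exp_mul_le_exp_neg_mul_mgf (isClosed_tangentHalfLine I θ z).measurableSet
          (hint n _) (hint n _) fun y hy => ?_
        have := mul_nonneg hn0 hy
        linarith
    _ ≤ exp (-(a n * ((deriv I z - θ) * z))) * exp (a n * (c + (deriv I z - θ) * z)) := by gcongr
    _ = exp (a n * c) := by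
        rw [← exp_add]
        ring_nf

variable (hI : StrictConvexOn ℝ Set.univ I) (hdiff : Differentiable ℝ I)
include hI hdiff

theorem eventually_exp_mul_le_setIntegral_ball {x δ c : ℝ} (hδ : 0 < δ)
    (hc : c < deriv I x * x - I x) :
    ∀ᶠ n in atTop,
      exp (a n * c) ≤ ∫ y in Metric.ball x δ, exp (a n * deriv I x * y) ∂P n := by
  have htangent {z : ℝ} (hz : z ≠ x) : deriv I x * z - I z < deriv I x * x - I x := by
    have := add_mul_sub_lt_of_strictConvexOn hI trivial trivial hz (hdiff x).hasDerivAt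
    linarith
  obtain ⟨ρ, hρ, hρb⟩ := exists_between (max_lt hc (max_lt (htangent (z := x - δ) (by linarith))
    (htangent (z := x + δ) (by linarith))))
  obtain ⟨b, hb, hbx⟩ := exists_between hρb
  obtain ⟨d, hd, hdx⟩ := exists_between hbx
  simp only [max_lt_iff] at hρ
  have hmono : Monotone (deriv I) :=
    monotoneOn_univ.1 (hI.convexOn.monotoneOn_deriv fun x _ => hdiff x)
  filter_upwards [eventually_setIntegral_tangentHalfLine_le ha hint hcgf (deriv I x) hρ.2.1,
    eventually_setIntegral_tangentHalfLine_le ha hint hcgf (deriv I x) hρ.2.2,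
    eventually_le_mgf ha hint hcgf (x := x) (c := d) (by linarith),
    eventually_two_mul_exp_mul_le ha hb, eventually_two_mul_exp_mul_le ha hd,
    ha.eventually_ge_atTop 0] with n hleft hright hmgf hρn hbn hn
  have hcover := integral_le_add_add_of_compl_subset_union (hint n (a n * deriv I x))
    (fun y => (exp_pos _).le) (compl_ball_subset_tangentHalfLine hmono x hδ.le)
  have hcb : exp (a n * c) ≤ exp (a n * b) := by gcongr; linarith
  simp only [mgf, id] at hmgf
  linarith

theorem eventually_exp_mul_le_measureReal {U : Set ℝ} (hU : IsOpen U) {x c : ℝ} (hx : x ∈ U)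
    (hc : c < -I x) : ∀ᶠ n in atTop, exp (a n * c) ≤ (P n).real U := by
  obtain ⟨d, hcd, hd⟩ := exists_between hc
  have hslope : ∀ᶠ y in 𝓝 x, deriv I x * y < deriv I x * x + (d - c) :=
    Tendsto.eventually_lt_const (by linarith) (Continuous.tendsto (by fun_prop) x)
  obtain ⟨δ, hδ, hball⟩ := Metric.eventually_nhds_iff_ball.1 ((hU.eventually_mem hx).and hslope)
  filter_upwards [eventually_exp_mul_le_setIntegral_ball ha hint hcgf hI hdiff hδ
    (x := x) (c := d + deriv I x * x) (by linarith), ha.eventually_ge_atTop 0] with n hn hn0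
  have hbound : ∫ y in Metric.ball x δ, exp (a n * deriv I x * y) ∂P n ≤
      (P n).real U * exp (a n * (deriv I x * x + (d - c))) := by
    calc ∫ y in Metric.ball x δ, exp (a n * deriv I x * y) ∂P n
        ≤ ∫ _ in Metric.ball x δ, exp (a n * (deriv I x * x + (d - c))) ∂P n := by
          refine setIntegral_mono_on (hint n _).integrableOn
            (integrableOn_const (measure_ne_top _ _)) measurableSet_ball fun y hy =>
              exp_le_exp.2 ?_
          rw [mul_assoc]
          exact mul_le_mul_of_nonneg_left (hball y hy).2.le hn0
      _ = (P n).real (Metric.ball x δ) * exp (a n * (deriv I x * x + (d - c))) := by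
          rw [setIntegral_const, smul_eq_mul]
      _ ≤ (P n).real U * exp (a n * (deriv I x * x + (d - c))) := by
          exact mul_le_mul_of_nonneg_right (measureReal_mono fun y hy => (hball y hy).1)
            (exp_pos _).le
  rw [← mul_le_mul_iff_left₀ (exp_pos (a n * (deriv I x * x + (d - c)))), ← exp_add]
  refine le_trans (le_of_eq ?_) (hn.trans hbound)
  ring_nf

omit ha hint hI in
theorem exists_eq_zero_of_tendsto_cgf (hcoercive : Tendsto I (cocompact ℝ) atTop) :
    ∃ x₀, I x₀ = 0 ∧ deriv I x₀ = 0 ∧ ∀ x, 0 ≤ I x := by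
  obtain ⟨x₀, hx₀⟩ := hdiff.continuous.exists_forall_le hcoercive
  have hderiv : deriv I x₀ = 0 := IsLocalMin.deriv_eq_zero (.of_forall hx₀)
  have hlimit := hcgf x₀
  simp only [hderiv, mul_zero, cgf_zero, zero_sub] at hlimit
  have hzero : I x₀ = 0 := neg_eq_zero.1 (tendsto_nhds_unique tendsto_const_nhds hlimit).symm
  exact ⟨x₀, hzero, hderiv, fun x => hzero ▸ hx₀ x⟩

theorem eventually_measureReal_setOf_lt_le (hcoercive : Tendsto I (cocompact ℝ) atTop) {r c : ℝ}
    (hc : -r < c) : ∀ᶠ n in atTop, (P n).real {x | r < I x} ≤ exp (a n * c) := by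
  rcases lt_or_ge r 0 with hr | hr
  · filter_upwards [ha.eventually_ge_atTop 0] with n hn
    exact measureReal_le_one.trans (one_le_exp (mul_nonneg hn (by linarith)))
  · obtain ⟨x₀, hx₀, hderiv, -⟩ := exists_eq_zero_of_tendsto_cgf hcgf hdiff hcoercive
    obtain ⟨y, z, hy, hz, hsub⟩ := exists_setOf_lt_subset_tangentHalfLine hI.convexOn hdiff
      hcoercive hderiv (hx₀.trans_le hr)
    obtain ⟨d, hd, hdc⟩ := exists_between hc
    filter_upwards [
      eventually_setIntegral_tangentHalfLine_le ha hint hcgf 0 (z := y) (c := d) (by linarith),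
      eventually_setIntegral_tangentHalfLine_le ha hint hcgf 0 (z := z) (c := d) (by linarith),
      eventually_two_mul_exp_mul_le ha hdc] with n hyn hzn htwo
    simp only [mul_zero, zero_mul, exp_zero, setIntegral_const, smul_eq_mul, mul_one] at hyn hzn
    linarith [measureReal_mono (μ := P n) hsub,
      measureReal_union_le (μ := P n) (tangentHalfLine I 0 y) (tangentHalfLine I 0 z)]

theorem hasLDP_of_tendsto_cgf (hcoercive : Tendsto I (cocompact ℝ) atTop) :
    HasLDP P a fun x => ENNReal.ofReal (I x) := by
  obtain ⟨-, -, -, hnonneg⟩ := exists_eq_zero_of_tendsto_cgf hcgf hdiff hcoercive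
  exact hasLDP_of_forall_eventually ha hdiff.continuous hnonneg hcoercive
    (fun U hU x hx c hc => eventually_exp_mul_le_measureReal ha hint hcgf hI hdiff hU hx hc)
    fun r c hc => eventually_measureReal_setOf_lt_le ha hint hcgf hI hdiff hcoercive hc

end GartnerEllis

section FluctuationOfThePotential

theorem abs_le_mul_abs_of_hasDerivAt {f f' : ℝ → ℝ} {C u : ℝ} (hf : ∀ v, HasDerivAt f (f' v) v)
    (hf0 : f 0 = 0) (hbound : ∀ v, |v| ≤ |u| → |f' v| ≤ C) : |f u| ≤ C * |u| := by
  simpa [hf0] using (convex_Icc (-|u|) |u|).norm_image_sub_le_of_norm_hasDerivWithin_le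
    (fun v _ => (hf v).hasDerivWithinAt) (fun v hv => hbound v (abs_le.2 hv))
    (x := 0) ⟨by simp, by simp⟩ (abs_le.1 le_rfl)

/-- The fluctuation of the sum of the single-spin magnetizations `tanh (β (y + h i))`, `i < n`,
around its mean. -/
def tanhFluctuation (β : ℝ) (ν : Measure ℝ) : (ℕ → ℝ) → ℕ → ℝ → ℝ :=
  centeredSum ν fun y x => tanh (β * (y + x))

variable {β : ℝ} {ν : Measure ℝ} [IsProbabilityMeasure ν]

theorem ae_eventually_abs_tanhFluctuation_le (β : ℝ) (ν : Measure ℝ) [IsProbabilityMeasure ν] :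
    ∀ᵐ h ∂Measure.infinitePi fun _ : ℕ => ν, ∀ R ε : ℝ, 0 < ε → ∀ᶠ n : ℕ in atTop,
      ∀ y, |y| ≤ R → |tanhFluctuation β ν h n y| ≤ (n : ℝ) ^ (1 / 2 + ε) :=
  ae_eventually_forall_abs_centeredSum_le ν (fun y => Continuous.measurable (by fun_prop))
    (fun y x => (abs_tanh_lt_one _).le) (fun x => lipschitzWith_comp_mul_add lipschitzWith_tanh β x)

theorem abs_tanhFluctuation_le (h : ℕ → ℝ) (n : ℕ) (y : ℝ) :
    |tanhFluctuation β ν h n y| ≤ 2 * n := by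
  have hmean : |∫ x, tanh (β * (y + x)) ∂ν| ≤ 1 := by
    simpa using norm_integral_le_of_norm_le_const (μ := ν) (f := fun x => tanh (β * (y + x)))
      (.of_forall fun x => (abs_tanh_lt_one _).le)
  calc |tanhFluctuation β ν h n y|
      ≤ ∑ i ∈ Finset.range n, |tanh (β * (y + h i)) - ∫ x, tanh (β * (y + x)) ∂ν| := by
          rw [tanhFluctuation, centeredSum]
          exact Finset.abs_sum_le_sum_abs _ _
    _ ≤ ∑ _i ∈ Finset.range n, (2 : ℝ) := Finset.sum_le_sum fun i _ =>
        (abs_sub _ _).trans (by linarith [abs_tanh_lt_one (β * (y + h i))])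
    _ = 2 * n := by rw [Finset.sum_const, Finset.card_range, nsmul_eq_mul, mul_comm]

theorem hasDerivAt_Gn (β : ℝ) (h : ℕ → ℝ) (n : ℕ) (y : ℝ) :
    HasDerivAt (Gn β h n) (β * y - (1 / n) * ∑ i : Fin n, tanh (β * (y + h i)) * β) y := by
  have hsum : HasDerivAt (fun y => ∑ i : Fin n, log (cosh (β * (y + h i))))
      (∑ i : Fin n, tanh (β * (y + h i)) * β) y :=
    .fun_sum fun i _ => (hasDerivAt_log_cosh _).comp y (hasDerivAt_mul_add_const β (h i) y)
  refine (((hasDerivAt_pow 2 y).const_mul (β / 2)).sub (hsum.const_mul (1 / (n : ℝ)))).congr_deriv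
    ?_
  push_cast
  ring

theorem hasDerivAt_Gn_sub_G (hν : Integrable (fun x : ℝ => x) ν) (h : ℕ → ℝ) {n : ℕ} (hn : n ≠ 0)
    (y : ℝ) :
    HasDerivAt (fun y => Gn β h n y - G β ν y) (-(β * tanhFluctuation β ν h n y / n)) y := by
  refine ((hasDerivAt_Gn β h n y).sub (hasDerivAt_G β hν y)).congr_deriv ?_
  rw [tanhFluctuation, centeredSum, Finset.sum_sub_distrib, Finset.sum_const, Finset.card_range,
    nsmul_eq_mul, ← Finset.sum_mul, Finset.sum_range, meanTanh]
  field_simp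
  ring

theorem abs_Gn_sub_G_increment_le (hβ : 0 ≤ β) (hν : Integrable (fun x : ℝ => x) ν) (h : ℕ → ℝ)
    {n : ℕ} (hn : n ≠ 0) (m : ℝ) {u B : ℝ}
    (hB : ∀ v, |v| ≤ |u| → |tanhFluctuation β ν h n (m + v)| ≤ B) :
    |Gn β h n (m + u) - Gn β h n m - (G β ν (m + u) - G β ν m)| ≤ β * B / n * |u| := by
  refine abs_le_mul_abs_of_hasDerivAt
    (f := fun u => Gn β h n (m + u) - Gn β h n m - (G β ν (m + u) - G β ν m))
    (f' := fun v => -(β * tanhFluctuation β ν h n (m + v) / n)) (fun v => ?_) (by simp)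
    fun v hv => ?_
  · refine (((hasDerivAt_Gn_sub_G hν h hn (m + v)).comp_const_add m v).sub_const
      (Gn β h n m - G β ν m)).congr_of_eventuallyEq (.of_forall fun u => ?_)
    ring
  · rw [abs_neg, abs_div, abs_mul, abs_of_nonneg hβ, Nat.abs_cast]
    gcongr
    exact hB v hv

end FluctuationOfThePotential

section WellAtTheMinimum

variable {β : ℝ} {ν : Measure ℝ} {m l : ℝ} {k : ℕ}

theorem IsMinOfType.potentialWell [IsProbabilityMeasure ν] (hmin : IsMinOfType β ν m k l)
    (hpure : ∀ x, x ≠ m → G β ν m < G β ν x) (hβ : 0 < β) (hν : Integrable (fun x : ℝ => x) ν) :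
    PotentialWell k (l / (2 * k).factorial) fun u => G β ν (m + u) - G β ν m where
  continuous := by
    have := (contDiff_G β hν 0).continuous
    fun_prop
  pos u hu := sub_pos.2 (hpure _ (by simpa using hu))
  isLittleO := by
    obtain ⟨hk, -, hzero, hstrength⟩ := hmin
    rw [← hstrength]
    exact isLittleO_sub_of_iteratedDeriv_eq_zero (contDiff_G β hν (2 * k)) (by omega)
      fun i hi hik => hzero i hi (by omega)
  growth := ⟨β / 2, by positivity, β * (|m| + 1), le_G_add_sub_G hν hβ.le m⟩

theorem IsMinOfType.lt_of_one [IsFiniteMeasure ν] [NeZero ν] (hmin : IsMinOfType β ν m 1 l)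
    (hβ : 0 < β) (hν : Integrable (fun x : ℝ => x) ν) : l < β :=
  hmin.2.2.2 ▸ iteratedDeriv_two_G_lt hν hβ m

end WellAtTheMinimum

section ModerateScale

/-- The width `n ^ (α - 1)` of the window in which magnetizations per spin are observed when
`S_n - n m` is normalized by `n ^ α`. -/
def moderateWidth (α : ℝ) (n : ℕ) : ℝ := (n : ℝ) ^ (α - 1)

/-- The moderate deviations speed `n ^ (1 - 2 k (1 - α))`. -/
def moderateSpeed (k : ℕ) (α : ℝ) (n : ℕ) : ℝ := (n : ℝ) ^ (1 - 2 * (k : ℝ) * (1 - α))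

variable {k : ℕ} {α : ℝ}

theorem tendsto_moderateWidth (hα : α < 1) :
    Tendsto (fun n => moderateWidth α n) atTop (𝓝[>] 0) := by
  refine tendsto_nhdsWithin_iff.2 ⟨?_, ?_⟩
  · simpa only [moderateWidth, Function.comp_def, neg_sub] using
      (tendsto_rpow_neg_atTop (sub_pos.2 hα)).comp tendsto_natCast_atTop_atTop
  · filter_upwards [eventually_gt_atTop 0] with n hn
    exact rpow_pos_of_pos (Nat.cast_pos.2 hn) _

theorem natCast_mul_moderateWidth (α : ℝ) {n : ℕ} (hn : n ≠ 0) :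
    n * moderateWidth α n = (n : ℝ) ^ α := by
  have hn' : (n : ℝ) ≠ 0 := Nat.cast_ne_zero.2 hn
  rw [moderateWidth, rpow_sub_one hn', mul_div_cancel₀ _ hn']

theorem natCast_mul_moderateWidth_pow (k : ℕ) (α : ℝ) {n : ℕ} (hn : n ≠ 0) :
    n * moderateWidth α n ^ (2 * k) = moderateSpeed k α n := by
  have hpos : (0 : ℝ) < n := Nat.cast_pos.2 (Nat.pos_of_ne_zero hn)
  rw [moderateWidth, moderateSpeed, ← rpow_mul_natCast hpos.le]
  nth_rw 1 [← rpow_one (n : ℝ)]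
  rw [← rpow_add hpos]
  push_cast
  ring_nf

theorem mul_one_sub_lt_of_lt (hk : k ≠ 0) (hα : 1 - 1 / (2 * (2 * (k : ℝ) - 1)) < α) :
    (2 * (k : ℝ) - 1) * (1 - α) < 1 / 2 := by
  have hk1 : (1 : ℝ) ≤ k := Nat.one_le_cast.2 (Nat.one_le_iff_ne_zero.2 hk)
  have hpos : 0 < 2 * (2 * (k : ℝ) - 1) := by linarith
  have := (lt_div_iff₀ hpos).1 (sub_lt_comm.1 hα)
  linarith

theorem tendsto_moderateSpeed (hk : k ≠ 0) (hα : 1 - 1 / (2 * (2 * (k : ℝ) - 1)) < α)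
    (hα1 : α < 1) : Tendsto (moderateSpeed k α) atTop atTop := by
  have hk1 : (1 : ℝ) ≤ k := Nat.one_le_cast.2 (Nat.one_le_iff_ne_zero.2 hk)
  have hle : k * (1 - α) ≤ (2 * k - 1) * (1 - α) :=
    mul_le_mul_of_nonneg_right (by linarith) (sub_pos.2 hα1).le
  have hgap := mul_one_sub_lt_of_lt hk hα
  exact (tendsto_rpow_atTop (by linarith)).comp tendsto_natCast_atTop_atTop

theorem eventually_mul_rpow_div_le_mul_moderateWidth_pow (hk : k ≠ 0) {ε : ℝ}
    (hε : (2 * (k : ℝ) - 1) * (1 - α) + ε < 1 / 2) (B : ℝ) {η : ℝ} (hη : 0 < η) :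
    ∀ᶠ n : ℕ in atTop, B * (n : ℝ) ^ (1 / 2 + ε) / n ≤ η * moderateWidth α n ^ (2 * k - 1) := by
  have hlarge := (tendsto_rpow_atTop (y := 1 / 2 - ((2 * (k : ℝ) - 1) * (1 - α) + ε))
    (by linarith)).comp tendsto_natCast_atTop_atTop |>.eventually_ge_atTop (B / η)
  filter_upwards [hlarge, eventually_gt_atTop 0] with n hn hn0
  have hpos : (0 : ℝ) < n := Nat.cast_pos.2 hn0
  rw [div_le_iff₀ hpos, moderateWidth, ← rpow_mul_natCast hpos.le, Nat.cast_pred (by omega)]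
  calc B * (n : ℝ) ^ (1 / 2 + ε)
      ≤ (n : ℝ) ^ (1 / 2 - ((2 * (k : ℝ) - 1) * (1 - α) + ε)) * η * (n : ℝ) ^ (1 / 2 + ε) := by
        gcongr
        exact (div_le_iff₀ hη).1 hn
    _ = η * (n : ℝ) ^ ((α - 1) * (((2 * k : ℕ) : ℝ) - 1)) * n := by
        rw [mul_comm _ η, mul_assoc, mul_assoc, ← rpow_add hpos, ← rpow_add_one hpos.ne']
        push_cast
        ring_nf

theorem isNegligiblePerturbation_Gn_sub_G {β : ℝ} {ν : Measure ℝ} [IsProbabilityMeasure ν]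
    (hβ : 0 ≤ β) (hν : Integrable (fun x : ℝ => x) ν) (hk : k ≠ 0)
    (hα : 1 - 1 / (2 * (2 * (k : ℝ) - 1)) < α) {h : ℕ → ℝ}
    (hh : ∀ R ε : ℝ, 0 < ε → ∀ᶠ n : ℕ in atTop,
      ∀ y, |y| ≤ R → |tanhFluctuation β ν h n y| ≤ (n : ℝ) ^ (1 / 2 + ε)) (m : ℝ) :
    IsNegligiblePerturbation atTop k (fun n => moderateWidth α n) fun n u =>
      Gn β h n (m + u) - Gn β h n m - (G β ν (m + u) - G β ν m) where
  exists_le_mul_abs := by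
    refine ⟨β * 2, ?_⟩
    filter_upwards [eventually_ne_atTop 0] with n hn u
    refine (abs_Gn_sub_G_increment_le hβ hν h hn m fun v _ => abs_tanhFluctuation_le h n _).trans_eq
      ?_
    field_simp
  eventually_le R η hη := by
    obtain ⟨ε, hε0, hε⟩ := exists_between (sub_pos.2 (mul_one_sub_lt_of_lt hk hα))
    filter_upwards [eventually_ne_atTop 0, hh (|m| + R) ε hε0,
      eventually_mul_rpow_div_le_mul_moderateWidth_pow hk (lt_sub_iff_add_lt'.1 hε) β hη]
      with n hn hfluc hle u hu
    refine (abs_Gn_sub_G_increment_le hβ hν h hn m fun v hv => hfluc _ ?_).trans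
      (mul_le_mul_of_nonneg_right hle (abs_nonneg u))
    exact (abs_add_le m v).trans (by gcongr; exact hv.trans hu)

end ModerateScale

section FluctuationLaw

/-- The law of `(S_n - n m) / n ^ α` under the Gibbs measure. -/
def fluctuationLaw (β : ℝ) (h : ℕ → ℝ) (m α : ℝ) (n : ℕ) : Measure ℝ :=
  (gibbsMeasure β h n).map fun σ => (mag σ - n * m) / (n : ℝ) ^ α

variable {β : ℝ} {k : ℕ} (h : ℕ → ℝ) (m α : ℝ)

instance isProbabilityMeasure_fluctuationLaw (β : ℝ) (n : ℕ) :
    IsProbabilityMeasure (fluctuationLaw β h m α n) :=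
  Measure.isProbabilityMeasure_map (measurable_of_finite _).aemeasurable

theorem integrable_exp_mul_fluctuationLaw (β : ℝ) (n : ℕ) (t : ℝ) :
    Integrable (fun y => exp (t * y)) (fluctuationLaw β h m α n) :=
  (integrable_map_measure (Continuous.aestronglyMeasurable (by fun_prop))
    (measurable_of_finite _).aemeasurable).2 .of_finite

theorem cgf_id_fluctuationLaw (β : ℝ) (n : ℕ) (t : ℝ) :
    cgf id (fluctuationLaw β h m α n) t =
      cgf (fun σ => mag σ - n * m) (gibbsMeasure β h n) (t / (n : ℝ) ^ α) := by
  rw [cgf, fluctuationLaw, mgf_id_map (measurable_of_finite _).aemeasurable]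
  simp only [cgf, mgf, div_mul_eq_mul_div, mul_div_assoc]

theorem mul_moderateSpeed_blowUp {n : ℕ} (hn : n ≠ 0) (k : ℕ) (H : ℝ → ℝ) (s : ℝ) :
    moderateSpeed k α n * blowUp k (moderateWidth α n) H s = n * H (moderateWidth α n * s) := by
  have hw : moderateWidth α n ≠ 0 := (rpow_pos_of_pos (by positivity) _).ne'
  rw [← natCast_mul_moderateWidth_pow k α hn, blowUp]
  field_simp

theorem inv_mul_cgf_fluctuationLaw (hβ : 0 < β) (hk : k ≠ 0) {n : ℕ} (hn : n ≠ 0) (θ : ℝ) :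
    (moderateSpeed k α n)⁻¹ * cgf id (fluctuationLaw β h m α n) (moderateSpeed k α n * θ) =
      (moderateSpeed k α n)⁻¹ * log (∫ s, exp (moderateSpeed k α n * (θ * s -
          blowUp k (moderateWidth α n) (fun u => Gn β h n (m + u) - Gn β h n m) s))) -
        (moderateSpeed k α n)⁻¹ * log (∫ s, exp (moderateSpeed k α n * (0 * s -
          blowUp k (moderateWidth α n) (fun u => Gn β h n (m + u) - Gn β h n m) s))) -
        θ ^ 2 / (2 * β) * moderateWidth α n ^ (2 * (k - 1)) := by
  have hw : 0 < moderateWidth α n := rpow_pos_of_pos (by positivity) _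
  have hgauss : (moderateSpeed k α n)⁻¹ *
      (n * (moderateSpeed k α n * θ / (n : ℝ) ^ α) ^ 2 / (2 * β)) =
        θ ^ 2 / (2 * β) * moderateWidth α n ^ (2 * (k - 1)) := by
    obtain ⟨j, rfl⟩ := Nat.exists_eq_succ_of_ne_zero hk
    rw [← natCast_mul_moderateWidth_pow _ α hn, ← natCast_mul_moderateWidth α hn,
      Nat.succ_sub_one, Nat.mul_succ, pow_add]
    field_simp
  have htilt : n * (moderateSpeed k α n * θ / (n : ℝ) ^ α) * moderateWidth α n =
      moderateSpeed k α n * θ := by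
    rw [← natCast_mul_moderateWidth α hn]
    field_simp
  rw [cgf_id_fluctuationLaw, cgf_mag_sub_gibbsMeasure h hβ hn m _ hw, mul_sub, mul_sub, hgauss]
  simp only [htilt, mul_sub, mul_moderateSpeed_blowUp α hn, zero_mul, zero_sub, mul_neg,
    mul_assoc]

-- As the window shrinks, the Gaussian smoothing contributes `0 ^ (2 * (k - 1))`: it survives only
-- for `k = 1`.
theorem tendsto_inv_mul_cgf_fluctuationLaw {H : ℝ → ℝ} {κ : ℝ} (hβ : 0 < β) (hk : k ≠ 0)
    (hκ : 0 < κ) (hH : PotentialWell k κ H)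
    (hα : 1 - 1 / (2 * (2 * (k : ℝ) - 1)) < α) (hα1 : α < 1)
    (hD : IsNegligiblePerturbation atTop k (fun n => moderateWidth α n) fun n u =>
      Gn β h n (m + u) - Gn β h n m - H u) (x : ℝ) :
    Tendsto (fun n => (moderateSpeed k α n)⁻¹ * cgf id (fluctuationLaw β h m α n)
      (moderateSpeed k α n * (2 * k * κ * x ^ (2 * k - 1)))) atTop
      (𝓝 ((2 * k - 1) * κ * x ^ (2 * k) -
        (2 * k * κ * x ^ (2 * k - 1)) ^ 2 / (2 * β) * 0 ^ (2 * (k - 1)))) := by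
  have hw := tendsto_moderateWidth hα1
  have hlaplace (x : ℝ) := hH.tendsto_inv_mul_log_integral_exp
    (Hn := fun n u => Gn β h n (m + u) - Gn β h n m) hk hκ hD hw
    (tendsto_moderateSpeed hk hα hα1) x (by
      filter_upwards [eventually_ne_atTop 0] with n hn
      simp only [mul_sub, mul_moderateSpeed_blowUp α hn, ← mul_assoc]
      simp only [← mul_sub]
      exact integrable_exp_mul_sub_mul_Gn_rescale h hβ hn m _
        (rpow_pos_of_pos (by positivity) _).ne')
  have hzero := hlaplace 0
  have hgauss := ((hw.mono_right nhdsWithin_le_nhds).pow (2 * (k - 1))).const_mul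
    ((2 * k * κ * x ^ (2 * k - 1)) ^ 2 / (2 * β))
  rw [zero_pow (by omega), zero_pow (by omega), mul_zero, mul_zero] at hzero
  have hlimit := ((hlaplace x).sub hzero).sub hgauss
  rw [sub_zero] at hlimit
  refine hlimit.congr' ?_
  filter_upwards [eventually_ne_atTop 0] with n hn
  exact (inv_mul_cgf_fluctuationLaw h m α hβ hk hn _).symm

end FluctuationLaw

section RateFunction

theorem tendsto_mul_pow_even_cocompact {k : ℕ} (hk : k ≠ 0) {K : ℝ} (hK : 0 < K) :
    Tendsto (fun x : ℝ => K * x ^ (2 * k)) (cocompact ℝ) atTop := by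
  simpa only [Function.comp_def, norm_eq_abs, (even_two_mul k).pow_abs] using
    (((tendsto_pow_atTop (by omega : 2 * k ≠ 0)).comp
      (tendsto_norm_cocompact_atTop (E := ℝ))).const_mul_atTop hK)

theorem hasLDP_mul_pow_even_of_tendsto_cgf {P : ℕ → Measure ℝ} [∀ n, IsProbabilityMeasure (P n)]
    {a : ℕ → ℝ} {k : ℕ} {K : ℝ} (hk : k ≠ 0) (hK : 0 < K) (ha : Tendsto a atTop atTop)
    (hint : ∀ n t, Integrable (fun y => exp (t * y)) (P n))
    (hcgf : ∀ x, Tendsto (fun n => (a n)⁻¹ * cgf id (P n) (a n * (2 * k * K * x ^ (2 * k - 1))))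
      atTop (𝓝 ((2 * k - 1) * K * x ^ (2 * k)))) :
    HasLDP P a fun x => ENNReal.ofReal (K * x ^ (2 * k)) := by
  refine hasLDP_of_tendsto_cgf ha hint (fun x => ?_) (strictConvexOn_mul_pow_even hk hK)
    (fun x => (hasDerivAt_mul_pow_even k K x).differentiableAt)
    (tendsto_mul_pow_even_cocompact hk hK)
  rw [(hasDerivAt_mul_pow_even k K x).deriv]
  convert hcgf x using 2
  rw [← pow_sub_one_mul (by omega : 2 * k ≠ 0) x]
  ring

/-- The coefficient of `x ^ (2 * k)` in the moderate deviations rate function. -/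
def mdpCoeff (β l : ℝ) (k : ℕ) : ℝ :=
  if k = 1 then 1 / (2 * (l⁻¹ - β⁻¹)) else l / (2 * k).factorial

variable {β l : ℝ} {k : ℕ}

theorem mdpRate_eq_ofReal_mdpCoeff (β l : ℝ) (k : ℕ) :
    mdpRate β l k = fun x => ENNReal.ofReal (mdpCoeff β l k * x ^ (2 * k)) := by
  funext x
  unfold mdpRate mdpCoeff
  split_ifs with hk
  · rw [hk, mul_one, one_div_mul_eq_div]
  · rw [div_mul_eq_mul_div]

theorem mdpCoeff_pos (hl : 0 < l) (hlβ : k = 1 → l < β) : 0 < mdpCoeff β l k := by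
  unfold mdpCoeff
  split_ifs with hk
  · have := sub_pos.2 (inv_strictAnti₀ hl (hlβ hk))
    positivity
  · positivity

-- Legendre duality: `x ↦ mdpCoeff * x ^ (2 * k)` is conjugate to the limit of the cumulant
-- generating functions.
theorem exists_slope_eq_mdpCoeff (hk : k ≠ 0) (hβ : 0 < β) (hl : 0 < l) (hlβ : k = 1 → l < β)
    (x : ℝ) :
    ∃ y, 2 * k * (l / (2 * k).factorial) * y ^ (2 * k - 1) =
        2 * k * mdpCoeff β l k * x ^ (2 * k - 1) ∧
      (2 * k - 1) * (l / (2 * k).factorial) * y ^ (2 * k) -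
          (2 * k * (l / (2 * k).factorial) * y ^ (2 * k - 1)) ^ 2 / (2 * β) * 0 ^ (2 * (k - 1)) =
        (2 * k - 1) * mdpCoeff β l k * x ^ (2 * k) := by
  unfold mdpCoeff
  split_ifs with hk1
  · subst hk1
    have hgap : β - l ≠ 0 := (sub_pos.2 (hlβ rfl)).ne'
    refine ⟨x / (l * (l⁻¹ - β⁻¹)), ?_, ?_⟩ <;>
      simp only [inv_sub_inv hl.ne' hβ.ne', mul_one, Nat.factorial_two, Nat.cast_one,
        Nat.cast_ofNat, Nat.reduceSub, pow_one, mul_zero, pow_zero]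
    · field_simp
    · field_simp
      ring
  · refine ⟨x, rfl, ?_⟩
    rw [zero_pow (by omega), mul_zero, sub_zero]

end RateFunction

theorem mdp_unconditioned_version_general
    (β : ℝ) (hβ : 0 < β) (ν : Measure ℝ) [IsProbabilityMeasure ν]
    (hmom : Integrable (fun x : ℝ => x) ν)
    (μ : Measure (ℕ → ℝ)) (hμ : IsProductMeasure ν μ)
    (m : ℝ) (k : ℕ) (l : ℝ) (hmin : IsMinOfType β ν m k l)
    (hpure : ∀ x : ℝ, x ≠ m → G β ν m < G β ν x) :
    ∀ᵐ h ∂μ, ∀ α : ℝ, 1 - 1 / (2 * (2 * (k : ℝ) - 1)) < α → α < 1 →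
      HasLDP
        (fun n => (gibbsMeasure β h n).map (fun σ => (mag σ - n * m) / (n : ℝ) ^ α))
        (fun n => (n : ℝ) ^ (1 - 2 * (k : ℝ) * (1 - α)))
        (mdpRate β l k) := by
  have hk : k ≠ 0 := Nat.one_le_iff_ne_zero.1 hmin.1
  have hl : 0 < l := hmin.2.1
  have hlβ : k = 1 → l < β := fun hk1 => IsMinOfType.lt_of_one (hk1 ▸ hmin) hβ hmom
  rw [hμ.eq_infinitePi, mdpRate_eq_ofReal_mdpCoeff]
  filter_upwards [ae_eventually_abs_tanhFluctuation_le β ν] with h hh α hα hα1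
  refine hasLDP_mul_pow_even_of_tendsto_cgf (P := fluctuationLaw β h m α) hk (mdpCoeff_pos hl hlβ)
    (tendsto_moderateSpeed hk hα hα1) (integrable_exp_mul_fluctuationLaw h m α β) fun x => ?_
  obtain ⟨y, hslope, hvalue⟩ := exists_slope_eq_mdpCoeff hk hβ hl hlβ x
  rw [← hslope, ← hvalue]
  exact tendsto_inv_mul_cgf_fluctuationLaw h m α hβ hk (by positivity)
    (hmin.potentialWell hpure hβ hmom) hα hα1
    (isNegligiblePerturbation_Gn_sub_G hβ.le hmom hk hα hh m) y

/-- MDP, unconditioned version (Theorem 3.4 of the paper). -/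
theorem mdp_unconditioned_version
    (β : ℝ) (hβ : 0 < β) (ν : Measure ℝ) [IsProbabilityMeasure ν]
    (hmom : Integrable (fun x : ℝ => x ^ 2) ν)
    (μ : Measure (ℕ → ℝ)) [IsProbabilityMeasure μ] (hμ : IsProductMeasure ν μ)
    (m : ℝ) (k : ℕ) (l : ℝ) (hmin : IsMinOfType β ν m k l)
    (hpure : ∀ x : ℝ, x ≠ m → G β ν m < G β ν x) :
    ∀ᵐ h ∂μ, ∀ α : ℝ, 1 - 1 / (2 * (2 * (k : ℝ) - 1)) < α → α < 1 →
      HasLDP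
        (fun n => (gibbsMeasure β h n).map (fun σ => (mag σ - n * m) / (n : ℝ) ^ α))
        (fun n => (n : ℝ) ^ (1 - 2 * (k : ℝ) * (1 - α)))
        (mdpRate β l k) := by
  exact mdp_unconditioned_version_general β hβ ν
    (((memLp_two_iff_integrable_sq aestronglyMeasurable_id).2 hmom).integrable one_le_two)
    μ hμ m k l hmin hpure
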